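/- arXiv:math/0504068 — 2 statements merged into one kernel-verified Lean document; each statement's English description precedes it below -/
import Mathlib

section
/- A ring R is quasi-Frobenius if and only if R is right Johns and left CS. -/
open MulOpposite in
/-- Right ideals of `R`, as submodules of `R` over `Rᵐᵒᵖ`. -/
abbrev RIdeal (R : Type*) [Ring R] := Submodule Rᵐᵒᵖ R

section Defs
variable (R : Type*) [Ring R]

/-- Left annihilator of a subset. -/
def lAnn (X : Set R) : Set R := {a | ∀ x ∈ X, a * x = 0}

/-- Right annihilator of a subset. -/
def rAnn (X : Set R) : Set R := {a | ∀ x ∈ X, x * a = 0}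

/-- Right annihilator of a subset, as a right ideal. -/
def rAnnI (X : Set R) : RIdeal R where
  carrier := rAnn R X
  add_mem' := by intro a b ha hb x hx; rw [mul_add, ha x hx, hb x hx, add_zero]
  zero_mem' := by intro x hx; rw [mul_zero]
  smul_mem' := by
    intro c a ha x hx
    show x * (a * c.unop) = 0
    rw [← mul_assoc, ha x hx, zero_mul]

/-- `R` is left P-injective: `rl(a) = aR` for every `a`. -/
def IsLeftPInjective : Prop :=
  ∀ a x : R, (∀ u : R, u * a = 0 → u * x = 0) ↔ ∃ s : R, x = a * s

/-- `R` is left 2-injective. -/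
def IsLeft2Injective : Prop :=
  ∀ (a b : R) (f : ↥(Submodule.span R ({a, b} : Set R)) →ₗ[R] R),
    ∃ g : R →ₗ[R] R, ∀ x : ↥(Submodule.span R ({a, b} : Set R)), g (x : R) = f x

/-- `R` is left FP-injective: every matrix ring over `R` is left P-injective. -/
def IsLeftFPInjective : Prop :=
  ∀ n : ℕ, IsLeftPInjective (Matrix (Fin n) (Fin n) R)

/-- A left ideal is small if `K + I = R` implies `K = R`. -/
def IsSmallLeftIdeal (I : Ideal R) : Prop := ∀ K : Ideal R, K ⊔ I = ⊤ → K = ⊤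

/-- A complement left ideal: maximal with respect to intersecting some left ideal trivially. -/
def IsComplementLeftIdeal (C : Ideal R) : Prop :=
  ∃ S : Ideal R, C ⊓ S = ⊥ ∧ ∀ C' : Ideal R, C ≤ C' → C' ⊓ S = ⊥ → C' = C

/-- A right ideal is essential in `R`. -/
def IsEssentialRIdeal (I : RIdeal R) : Prop := ∀ K : RIdeal R, K ⊓ I = ⊥ → K = ⊥

/-- The right socle: the sum of all simple (minimal) right ideals. -/
def rSocle : RIdeal R := sSup {m : RIdeal R | IsSimpleModule Rᵐᵒᵖ m}

/-- The right singular ideal. -/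
def rSingular : Set R := {a | IsEssentialRIdeal R (rAnnI R {a})}

/-- ACC on right annihilators. -/
def ACCOnRightAnnihilators : Prop :=
  ∀ f : ℕ → Set R, (∀ n, ∃ X : Set R, f n = rAnn R X) → (∀ n, f n ⊆ f (n + 1)) →
    ∃ n, ∀ m, n ≤ m → f m = f n

/-- The Jacobson radical, as a set. -/
def jacobsonSet : Set R := (TwoSidedIdeal.jacobson (⊥ : TwoSidedIdeal R) : Set R)

/-- A subset is nilpotent if products of some fixed length of its elements vanish. -/
def IsNilpotentSet (J : Set R) : Prop :=
  ∃ n : ℕ, ∀ f : Fin (n + 1) → R, (∀ i, f i ∈ J) → (List.ofFn f).prod = 0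

/-- `R` is quasi-Frobenius: left noetherian and left self-injective. -/
def IsQuasiFrobenius : Prop := IsNoetherianRing R ∧ Module.Injective R R

/-- `R` is right mininjective. -/
def IsRightMininjective : Prop :=
  ∀ (I : RIdeal R), IsSimpleModule Rᵐᵒᵖ I → ∀ f : I →ₗ[Rᵐᵒᵖ] R,
    ∃ c : R, ∀ x : I, f x = c * (x : R)

/-- `R` is left mininjective. -/
def IsLeftMininjective : Prop :=
  ∀ (I : Ideal R), IsSimpleModule R I → ∀ f : I →ₗ[R] R,
    ∃ c : R, ∀ x : I, f x = (x : R) * c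

/-- `R` is right simple injective. -/
def IsRightSimpleInjective : Prop :=
  ∀ (I : RIdeal R) (f : I →ₗ[Rᵐᵒᵖ] R), IsSimpleModule Rᵐᵒᵖ (LinearMap.range f) →
    ∃ c : R, ∀ x : I, f x = c * (x : R)

/-- `R` is left CS: every left ideal is essential in a direct summand of `R`. -/
def IsLeftCS : Prop :=
  ∀ I : Ideal R, ∃ K : Ideal R, (∃ K' : Ideal R, IsCompl K K') ∧ I ≤ K ∧
    ∀ L : Ideal R, L ≤ K → L ⊓ I = ⊥ → L = ⊥

/-- `R` is left min-CS: every minimal left ideal is essential in a direct summand. -/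
def IsLeftMinCS : Prop :=
  ∀ I : Ideal R, IsSimpleModule R I → ∃ K : Ideal R, (∃ K' : Ideal R, IsCompl K K') ∧ I ≤ K ∧
    ∀ L : Ideal R, L ≤ K → L ⊓ I = ⊥ → L = ⊥

/-- `R` is right Johns: right noetherian and every right ideal is a right annihilator. -/
def IsRightJohns : Prop :=
  IsNoetherianRing Rᵐᵒᵖ ∧ ∀ I : RIdeal R, ∃ X : Set R, (I : Set R) = rAnn R X

end Defs

section MoreDefs
variable (R : Type*) [Ring R]

/-- Left annihilator of a subset, as a left ideal. -/
def lAnnI (X : Set R) : Ideal R where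
  carrier := lAnn R X
  add_mem' := by intro a b ha hb x hx; rw [add_mul, ha x hx, hb x hx, add_zero]
  zero_mem' := by intro x hx; rw [zero_mul]
  smul_mem' := by
    intro c a ha x hx
    show c * a * x = 0
    rw [mul_assoc, ha x hx, mul_zero]

/-- A left ideal is essential in `R`. -/
def IsEssentialLIdeal (I : Ideal R) : Prop := ∀ K : Ideal R, K ⊓ I = ⊥ → K = ⊥

/-- The left singular ideal `Z_l`. -/
def lSingular : Set R := {a | IsEssentialLIdeal R (lAnnI R {a})}

end MoreDefs

/-!
Every right ideal of a right Johns ring being a right annihilator makes `R` left P-injective; with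
left CS this makes `R / J` von Neumann regular, `J` the Jacobson radical, and since `J` is nilpotent
and `R` right noetherian, `R` is semiprimary and right artinian. The operator
`I ↦ l(r(J) ∩ l(I))` is strictly increasing on the two-sided ideals above `J`, so it fixes `J`;
hence `l(r(J)) = J` and every simple left module embeds in `R`. Together with left CS this makes `R`
right mininjective, and over a right artinian ring mininjectivity turns the double annihilator
property of right ideals into that of left ideals. The two dualities give
`r(A ∩ B) = r(A) + r(B)`, which glues extensions of maps from `A` and `B` to one from `A + B`, so
`R` is left self-injective. Conversely, over a left self-injective ring finitely generated right
ideals are right annihilators and left ideals are essential in direct summands; for `R` left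
noetherian, regularity of `R / J` again makes it left artinian, hence right noetherian.
-/

open MulOpposite

section Order

theorem exists_le_maximal_disjoint {α : Type*} [CompleteLattice α] [IsCompactlyGenerated α]
    {a b : α} (hab : Disjoint a b) : ∃ c, a ≤ c ∧ Maximal (Disjoint · b) c :=
  zorn_le_nonempty₀ {c | Disjoint c b}
    (fun C hC hchain _ _ => ⟨sSup C, hchain.directedOn.disjoint_sSup_left.2 fun _ hc => hC hc,
      fun _ => le_sSup⟩) a hab

theorem eq_bot_of_maximal_disjoint {α : Type*} [Lattice α] [OrderBot α] [IsModularLattice α]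
    {a b c k : α} (hc : Maximal (Disjoint · a) c) (hkc : Disjoint k c) (hak : a ≤ k) (hbk : b ≤ k)
    (hba : Disjoint b a) : b = ⊥ := by
  have hcb : Disjoint (c ⊔ b) a :=
    hba.disjoint_sup_left_of_disjoint_sup_right (hkc.symm.mono_right (sup_le hbk hak))
  exact disjoint_self.1 (hkc.mono hbk (le_sup_right.trans (hc.2 hcb le_sup_left)))

theorem not_lt_apply_of_strictMono {α : Type*} [Preorder α] [WellFoundedGT α] {f : α → α}
    (hf : StrictMono f) (a : α) : ¬ a < f a := by
  induction a using WellFoundedGT.induction with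
  | ind a ih => exact fun h => ih (f a) h (hf h)

end Order

section Linear
variable {R M N P : Type*} [Ring R] [AddCommGroup M] [AddCommGroup N] [AddCommGroup P]
  [Module R M] [Module R N] [Module R P]

theorem exists_linearMap_range_of_ker_le {f : M →ₗ[R] N} {g : M →ₗ[R] P}
    (h : LinearMap.ker f ≤ LinearMap.ker g) :
    ∃ φ : LinearMap.range f →ₗ[R] P, ∀ x, φ (f.rangeRestrict x) = g x :=
  ⟨(LinearMap.ker f).liftQ g h ∘ₗ f.quotKerEquivRange.symm.toLinearMap, fun x =>
    congrArg ((LinearMap.ker f).liftQ g h) (f.quotKerEquivRange_symm_apply_image x _)⟩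

end Linear

section Jacobson
variable {R : Type*} [Ring R]

theorem isUnit_one_sub_mul_comm {a b : R} : IsUnit (1 - a * b) ↔ IsUnit (1 - b * a) := by
  simpa [spectrum.mem_iff] using
    not_congr (spectrum.unit_mem_mul_comm (R := ℤ) (a := a) (b := b) (r := 1))

theorem mem_jacobson_iff_forall_left_inverse {x : R} :
    x ∈ Ring.jacobson R ↔ ∀ y, ∃ z, z * (1 - y * x) = 1 := by
  rw [← Ideal.jacobson_bot, Ideal.mem_jacobson_iff]
  refine (Equiv.neg R).forall_congr fun y => exists_congr fun z => ?_
  rw [Ideal.mem_bot, sub_eq_zero, Equiv.neg_apply, neg_mul, sub_neg_eq_add, mul_add, mul_one,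
    mul_assoc, add_comm]

theorem mem_jacobson_iff_forall_isUnit {x : R} :
    x ∈ Ring.jacobson R ↔ ∀ y, IsUnit (1 - y * x) := by
  refine ⟨fun hx y => ?_, fun h => mem_jacobson_iff_forall_left_inverse.2 fun y =>
    (h y).exists_left_inv⟩
  obtain ⟨z, hz⟩ := mem_jacobson_iff_forall_left_inverse.1 hx y
  obtain ⟨w, hw⟩ := mem_jacobson_iff_forall_left_inverse.1 hx (-(z * y))
  have hz' : 1 - -(z * y) * x = z := by
    rw [neg_mul, sub_neg_eq_add, mul_assoc, ← hz, mul_sub, mul_one, sub_add_cancel]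
  rw [hz'] at hw
  exact ⟨⟨1 - y * x, z, left_inv_eq_right_inv hw hz ▸ hw, hz⟩, rfl⟩

theorem mem_jacobson_iff_forall_isUnit_right {x : R} :
    x ∈ Ring.jacobson R ↔ ∀ y, IsUnit (1 - x * y) := by
  simp only [mem_jacobson_iff_forall_isUnit, isUnit_one_sub_mul_comm (a := x)]

theorem op_mem_jacobson_iff {x : R} : op x ∈ Ring.jacobson Rᵐᵒᵖ ↔ x ∈ Ring.jacobson R := by
  rw [mem_jacobson_iff_forall_isUnit_right, mem_jacobson_iff_forall_isUnit,
    op_surjective.forall]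
  exact forall_congr' fun y => isUnit_op (m := 1 - y * x)

end Jacobson

section Semiprimary
variable {R : Type*} [Ring R]

variable (R) in
/-- `R` is von Neumann regular: every element `a` has a quasi-inverse `x`, i.e. `a = a x a`. -/
def IsVonNeumannRegular : Prop := ∀ a : R, ∃ x, a = a * x * a

theorem IsVonNeumannRegular.exists_right_identity_sup (hreg : IsVonNeumannRegular R)
    {I I' : Ideal R} (hI : ∃ e ∈ I, ∀ x ∈ I, x * e = x)
    (hI' : ∃ e ∈ I', ∀ x ∈ I', x * e = x) :
    ∃ e ∈ I ⊔ I', ∀ x ∈ I ⊔ I', x * e = x := by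
  obtain ⟨e, he, hIe⟩ := hI
  obtain ⟨e', he', hIe'⟩ := hI'
  -- `b = e' (1 - e)` satisfies `b e = 0`, so `1 - (1 - e) (1 - g b)` is a right identity for both.
  obtain ⟨b, hb⟩ : ∃ b, b = e' - e' * e := ⟨_, rfl⟩
  obtain ⟨g, hg⟩ := hreg b
  have hbe : b * e = 0 := by rw [hb, sub_mul, mul_assoc, hIe e he, sub_self]
  have hbI : b ∈ I ⊔ I' := hb ▸ sub_mem (Ideal.mem_sup_right he')
    (Ideal.mul_mem_left _ _ (Ideal.mem_sup_left he))
  have hfix : ∀ x ∈ I, x * (e + g * b - e * (g * b)) = x := fun x hx => by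
    rw [mul_sub, mul_add, ← mul_assoc x e, hIe x hx, add_sub_cancel_right]
  have hfixb : b * (e + g * b - e * (g * b)) = b := by
    rw [mul_sub, mul_add, ← mul_assoc b e, hbe, zero_mul, sub_zero, zero_add, ← mul_assoc, ← hg]
  have hfix' : e' * (e + g * b - e * (g * b)) = e' := by
    rw [← sub_add_cancel e' (e' * e), ← hb, add_mul, hfixb, hfix _ (I.mul_mem_left _ he)]
  refine ⟨e + g * b - e * (g * b), sub_mem (add_mem (Ideal.mem_sup_left he)
    (Ideal.mul_mem_left _ _ hbI)) (Ideal.mul_mem_left _ _ (Ideal.mul_mem_left _ _ hbI)),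
    fun x hx => ?_⟩
  obtain ⟨y, hy, z, hz, rfl⟩ := Submodule.mem_sup.1 hx
  rw [add_mul, hfix y hy, ← hIe' z hz, mul_assoc, hfix']

theorem IsVonNeumannRegular.exists_right_identity_of_fg (hreg : IsVonNeumannRegular R)
    {I : Ideal R} (hI : I.FG) : ∃ e ∈ I, ∀ x ∈ I, x * e = x := by
  induction I, hI using Submodule.fg_induction with
  | singleton b =>
    obtain ⟨g, hg⟩ := hreg b
    refine ⟨g * b, Ideal.mul_mem_left _ _ (Ideal.mem_span_singleton_self b), fun x hx => ?_⟩
    obtain ⟨a, rfl⟩ := Ideal.mem_span_singleton'.1 hx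
    rw [mul_assoc, ← mul_assoc b, ← hg]
  | sup I I' _ _ hI hI' => exact hreg.exists_right_identity_sup hI hI'

theorem IsVonNeumannRegular.isSemisimpleRing [IsNoetherianRing R] (hreg : IsVonNeumannRegular R) :
    IsSemisimpleRing R := by
  refine (isSemisimpleModule_iff R R).2 ⟨fun I : Ideal R => ?_⟩
  obtain ⟨e, he, hIe⟩ := hreg.exists_right_identity_of_fg (IsNoetherian.noetherian I)
  let p : R →ₗ[R] I := (LinearMap.toSpanSingleton R R e).codRestrict I fun x => I.mul_mem_left x he
  exact ⟨LinearMap.ker p, LinearMap.isCompl_of_proj fun x => Subtype.ext (hIe x x.2)⟩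

theorem IsVonNeumannRegular.mulOpposite (hreg : IsVonNeumannRegular R) :
    IsVonNeumannRegular Rᵐᵒᵖ := fun a => by
  obtain ⟨x, hx⟩ := hreg a.unop
  exact ⟨op x, unop_injective (by simpa [mul_assoc] using hx)⟩

theorem isVonNeumannRegular_quotient_jacobson
    (hreg : ∀ a : R, ∃ x, a - a * x * a ∈ Ring.jacobson R) :
    IsVonNeumannRegular (R ⧸ Ring.jacobson R) := fun a => by
  obtain ⟨a, rfl⟩ := Ideal.Quotient.mk_surjective a
  obtain ⟨x, hx⟩ := hreg a
  exact ⟨Ideal.Quotient.mk _ x, by simpa using Ideal.Quotient.eq.2 hx⟩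

theorem IsVonNeumannRegular.isSemiprimaryRing [IsNoetherianRing R]
    (hreg : IsVonNeumannRegular (R ⧸ Ring.jacobson R)) (hJ : IsNilpotent (Ring.jacobson R)) :
    IsSemiprimaryRing R where
  isSemisimpleRing :=
    have : IsNoetherianRing (R ⧸ Ring.jacobson R) :=
      isNoetherianRing_of_surjective R _ (Ideal.Quotient.mk _) Ideal.Quotient.mk_surjective
    hreg.isSemisimpleRing
  isNilpotent := hJ

theorem IsVonNeumannRegular.isSemiprimaryRing_of_mulOpposite [IsNoetherianRing Rᵐᵒᵖ]
    (hreg : IsVonNeumannRegular (R ⧸ Ring.jacobson R)) (hJ : IsNilpotent (Ring.jacobson R)) :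
    IsSemiprimaryRing R where
  isSemisimpleRing :=
    have : IsNoetherianRing (R ⧸ Ring.jacobson R)ᵐᵒᵖ :=
      isNoetherianRing_of_surjective Rᵐᵒᵖ _ (Ideal.Quotient.mk (Ring.jacobson R)).op
        (op_surjective.comp <| Ideal.Quotient.mk_surjective.comp unop_surjective)
    isSemisimpleRing_mulOpposite_iff.1 hreg.mulOpposite.isSemisimpleRing
  isNilpotent := hJ

theorem unop_mem_jacobson_pow {n : ℕ} {x : Rᵐᵒᵖ} (hx : x ∈ Ring.jacobson Rᵐᵒᵖ ^ n) :
    x.unop ∈ Ring.jacobson R ^ n := by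
  induction n generalizing x with
  | zero => simp [Submodule.pow_zero, Ideal.one_eq_top]
  | succ n ih =>
    rw [Submodule.pow_succ] at hx
    rw [Ideal.IsTwoSided.pow_succ]
    refine Submodule.mul_induction_on hx (fun a ha b hb => ?_) fun a b ha hb => add_mem ha hb
    exact Ideal.mul_mem_mul (op_mem_jacobson_iff.1 hb) (ih ha)

instance isSemiprimaryRing_mulOpposite [IsSemiprimaryRing R] : IsSemiprimaryRing Rᵐᵒᵖ where
  isSemisimpleRing := by
    let f : R →+* (Rᵐᵒᵖ ⧸ Ring.jacobson Rᵐᵒᵖ)ᵐᵒᵖ :=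
      (Ideal.Quotient.mk (Ring.jacobson Rᵐᵒᵖ)).op.comp (RingEquiv.opOp R).toRingHom
    have hf : Function.Surjective f := op_surjective.comp <|
      Ideal.Quotient.mk_surjective.comp <| unop_surjective.comp (RingEquiv.opOp R).surjective
    have hker : ∀ x ∈ Ring.jacobson R, f x = 0 := fun x hx =>
      unop_injective (Ideal.Quotient.eq_zero_iff_mem.2 (op_mem_jacobson_iff.2 hx))
    exact isSemisimpleRing_mulOpposite_iff.1 (RingHom.isSemisimpleRing_of_surjective _
      (Ideal.Quotient.lift_surjective_of_surjective _ hker hf))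
  isNilpotent := by
    obtain ⟨n, hn⟩ := IsSemiprimaryRing.isNilpotent (R := R)
    refine ⟨n, eq_bot_iff.2 fun x hx => ?_⟩
    have := unop_mem_jacobson_pow hx
    rw [hn] at this
    exact unop_injective this

theorem exists_mem_forall_sub_mul_mem_jacobson [IsSemisimpleRing (R ⧸ Ring.jacobson R)]
    (I : Ideal R) : ∃ c ∈ I, ∀ x ∈ I, x - x * c ∈ Ring.jacobson R := by
  obtain ⟨e, he, hIe⟩ := IsSemisimpleRing.ideal_eq_span_idempotent
    (I.map (Ideal.Quotient.mk (Ring.jacobson R)))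
  obtain ⟨c, hc, rfl⟩ := (Ideal.mem_map_iff_of_surjective _ Ideal.Quotient.mk_surjective).1
    (hIe ▸ Ideal.mem_span_singleton_self e)
  refine ⟨c, hc, fun x hx => Ideal.Quotient.eq.1 ?_⟩
  obtain ⟨a, ha⟩ := Ideal.mem_span_singleton'.1 (hIe ▸ Ideal.mem_map_of_mem _ hx)
  rw [map_mul, ← ha, mul_assoc, he]

theorem exists_mul_ne_zero_forall_jacobson_mul_eq_zero (hJ : IsNilpotent (Ring.jacobson R))
    {x : R} (hx : x ≠ 0) : ∃ s, s * x ≠ 0 ∧ ∀ j ∈ Ring.jacobson R, j * (s * x) = 0 := by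
  classical
  have hex : ∃ n, ∀ t ∈ Ring.jacobson R ^ n, t * x = 0 :=
    hJ.imp fun n hn t ht => by
      rw [hn] at ht
      rw [Ideal.mem_bot.1 ht, zero_mul]
  obtain ⟨n, hn⟩ : ∃ n, Nat.find hex = n + 1 := Nat.exists_eq_succ_of_ne_zero fun h0 =>
    hx <| by
      simpa using (Nat.find_eq_zero hex).1 h0 1 (by simp [Submodule.pow_zero, Ideal.one_eq_top])
  obtain ⟨s, hs, hsx⟩ : ∃ s ∈ Ring.jacobson R ^ n, s * x ≠ 0 := by
    simpa using Nat.find_min hex (hn ▸ n.lt_succ_self)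
  refine ⟨s, hsx, fun j hj => ?_⟩
  rw [← mul_assoc]
  refine Nat.find_spec hex _ ?_
  rw [hn, Ideal.IsTwoSided.pow_succ]
  exact Ideal.mul_mem_mul hj hs

end Semiprimary

section Annihilators
variable {R : Type*} [Ring R]

theorem mem_lAnnI {X : Set R} {a : R} : a ∈ lAnnI R X ↔ ∀ x ∈ X, a * x = 0 := Iff.rfl

theorem mem_rAnnI {X : Set R} {a : R} : a ∈ rAnnI R X ↔ ∀ x ∈ X, x * a = 0 := Iff.rfl

@[simp]
theorem mem_lAnnI_singleton {a x : R} : a ∈ lAnnI R {x} ↔ a * x = 0 := by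
  simp [mem_lAnnI]

theorem lAnnI_anti {X Y : Set R} (h : X ⊆ Y) : lAnnI R Y ≤ lAnnI R X :=
  fun _ ha x hx => ha x (h hx)

theorem rAnnI_anti {X Y : Set R} (h : X ⊆ Y) : rAnnI R Y ≤ rAnnI R X :=
  fun _ ha x hx => ha x (h hx)

theorem RIdeal.mul_mem_right (T : RIdeal R) {x : R} (hx : x ∈ T) (r : R) : x * r ∈ T :=
  T.smul_mem (op r) hx

instance lAnnI_isTwoSided (I : Ideal R) : (lAnnI R (I : Set R)).IsTwoSided :=
  ⟨fun b ha x hx => by rw [mul_assoc, ha _ (I.mul_mem_left b hx)]⟩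

/-- A two-sided ideal, viewed as a right ideal. -/
def toRIdeal (I : Ideal R) [I.IsTwoSided] : RIdeal R where
  carrier := I
  add_mem' := I.add_mem
  zero_mem' := I.zero_mem
  smul_mem' c _ hx := I.mul_mem_right c.unop hx

theorem mem_toRIdeal {I : Ideal R} [I.IsTwoSided] {x : R} : x ∈ toRIdeal I ↔ x ∈ I := Iff.rfl

variable (R) in
/-- `R` is right dual if every right ideal `T` satisfies `rl(T) = T`. -/
def IsRightDual : Prop := ∀ T : RIdeal R, rAnnI R (lAnnI R (T : Set R) : Set R) = T

variable (R) in
/-- `R` is left dual if every left ideal `L` satisfies `lr(L) = L`. -/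
def IsLeftDual : Prop := ∀ L : Ideal R, lAnnI R (rAnnI R (L : Set R) : Set R) = L

theorem isRightJohns_iff : IsRightJohns R ↔ IsNoetherian Rᵐᵒᵖ R ∧ IsRightDual R := by
  refine and_congr (opLinearEquiv Rᵐᵒᵖ : R ≃ₗ[Rᵐᵒᵖ] Rᵐᵒᵖ).isNoetherian_iff.symm
    (forall_congr' fun T => ⟨?_, fun h => ⟨_, congrArg SetLike.coe h.symm⟩⟩)
  rintro ⟨X, hX⟩
  refine le_antisymm (fun x hx => ?_) fun x hx u hu => hu x hx
  rw [← SetLike.mem_coe, hX]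
  exact fun y hy => hx y fun t ht => (hX.subset ht) y hy

theorem IsRightDual.mem_of_lAnnI_mul_eq_zero (hR : IsRightDual R) {T : RIdeal R} {x : R}
    (hx : ∀ u ∈ lAnnI R (T : Set R), u * x = 0) : x ∈ T :=
  hR T ▸ hx

theorem IsLeftDual.mem_of_mul_rAnnI_eq_zero (hR : IsLeftDual R) {L : Ideal R} {x : R}
    (hx : ∀ u ∈ rAnnI R (L : Set R), x * u = 0) : x ∈ L :=
  hR L ▸ hx

theorem isLeftPInjective_of_span_singleton
    (hR : ∀ a : R, rAnnI R (lAnnI R (Submodule.span Rᵐᵒᵖ {a} : Set R) : Set R) =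
      Submodule.span Rᵐᵒᵖ {a}) : IsLeftPInjective R := by
  refine fun a x => ⟨fun hx => ?_, fun ⟨s, hs⟩ u hu => by rw [hs, ← mul_assoc, hu, zero_mul]⟩
  have hmem : x ∈ Submodule.span Rᵐᵒᵖ {a} := hR a ▸ fun u hu =>
    hx u (hu a (Submodule.mem_span_singleton_self a))
  obtain ⟨s, hs⟩ := Submodule.mem_span_singleton.1 hmem
  exact ⟨s.unop, hs.symm⟩

theorem IsRightDual.isLeftPInjective (hR : IsRightDual R) : IsLeftPInjective R :=
  isLeftPInjective_of_span_singleton fun _ => hR _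

end Annihilators

section CS
variable {R : Type*} [Ring R]

theorem mem_lSingular_iff {w : R} :
    w ∈ lSingular R ↔ ∀ y, y ≠ 0 → ∃ u, u * y ≠ 0 ∧ u * y * w = 0 := by
  refine ⟨fun hw y hy => ?_, fun h K hK => (Submodule.eq_bot_iff K).2 fun y hy => ?_⟩
  · by_contra! hcon
    refine hy (Ideal.span_singleton_eq_bot.1 (hw _ ((Submodule.eq_bot_iff _).2 ?_)))
    rintro _ ⟨hx, hxw⟩
    obtain ⟨u, rfl⟩ := Ideal.mem_span_singleton'.1 hx
    exact of_not_not fun h0 => hcon u h0 (mem_lAnnI_singleton.1 hxw)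
  · by_contra hy0
    obtain ⟨u, huy, huw⟩ := h y hy0
    exact huy ((Submodule.eq_bot_iff _).1 hK _ ⟨K.mul_mem_left u hy, mem_lAnnI_singleton.2 huw⟩)

theorem exists_right_identity_of_isCompl {K K' : Ideal R} (h : IsCompl K K') :
    ∃ e ∈ K, ∀ x ∈ K, x * e = x := by
  have hone : (1 : R) ∈ K ⊔ K' := h.sup_eq_top ▸ Submodule.mem_top
  obtain ⟨e, he, f, hf, hef⟩ := Submodule.mem_sup.1 hone
  refine ⟨e, he, fun x hx => (sub_eq_zero.1 (Submodule.disjoint_def.1 h.disjoint _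
    (sub_mem hx (K.mul_mem_left x he)) ?_)).symm⟩
  rw [← mul_one_sub, ← hef, add_sub_cancel_left]
  exact K'.mul_mem_left x hf

theorem IsLeftCS.exists_idempotent (hR : IsLeftCS R) (I : Ideal R) :
    ∃ e : R, e * e = e ∧ (∀ x ∈ I, x * e = x) ∧
      ∀ x, x ≠ 0 → x * e = x → ∃ u, u * x ∈ I ∧ u * x ≠ 0 := by
  obtain ⟨K, ⟨K', hK⟩, hIK, hess⟩ := hR I
  obtain ⟨e, he, hKe⟩ := exists_right_identity_of_isCompl hK
  refine ⟨e, hKe e he, fun x hx => hKe x (hIK hx), fun x hx0 hxe => ?_⟩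
  by_contra! hcon
  have hxK : x ∈ K := hxe ▸ K.mul_mem_left x he
  refine hx0 (Ideal.span_singleton_eq_bot.1 (hess _ ((Ideal.span_singleton_le_iff_mem K).2 hxK)
    ((Submodule.eq_bot_iff _).2 ?_)))
  rintro _ ⟨hy, hyI⟩
  obtain ⟨u, rfl⟩ := Ideal.mem_span_singleton'.1 hy
  exact hcon u hyI

theorem IsLeftCS.exists_sub_mem_lSingular (hcs : IsLeftCS R) (hp : IsLeftPInjective R) (a : R) :
    ∃ x, a - a * x * a ∈ lSingular R := by
  -- `l(a)` is essential in `R e`, so the left ideal `l(a) + R (1 - e)` is essential; for `s` with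
  -- `1 - e = (1 - e) a s` it annihilates `a - a (s (1 - e)) a`.
  obtain ⟨e, he, hle, hess⟩ := hcs.exists_idempotent (lAnnI R {a})
  obtain ⟨s, hs⟩ := (hp ((1 - e) * a) (1 - e)).1 fun u hu => by
    have hmem : u * (1 - e) ∈ lAnnI R {a} := mem_lAnnI_singleton.2 (by rw [mul_assoc, hu])
    rw [← hle _ hmem, mul_assoc, one_sub_mul, he, sub_self, mul_zero]
  refine ⟨s * (1 - e), mem_lSingular_iff.2 fun y hy => ?_⟩
  have hannih : ∀ v, v * a = 0 → v * (a - a * (s * (1 - e)) * a) = 0 := fun v hv => by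
    simp only [mul_sub, ← mul_assoc, hv, zero_mul, sub_zero]
  have hkill : (1 - e) * (a - a * (s * (1 - e)) * a) = 0 := by
    calc (1 - e) * (a - a * (s * (1 - e)) * a)
        = (1 - e) * a - (1 - e) * a * s * (1 - e) * a := by rw [mul_sub]; simp only [mul_assoc]
      _ = 0 := by rw [← hs, (show IsIdempotentElem e from he).one_sub.eq, sub_self]
  rw [one_sub_mul, sub_eq_zero] at hkill
  rw [hkill]
  by_cases hye : y * e = 0
  · exact ⟨1, by rwa [one_mul], by rw [one_mul, ← mul_assoc, hye, zero_mul]⟩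
  · obtain ⟨u, hu, hu0⟩ := hess (y * e) hye (by rw [mul_assoc, he])
    rw [← mul_assoc] at hu hu0
    refine ⟨u, left_ne_zero_of_mul hu0, ?_⟩
    rw [← mul_assoc, hannih _ (mem_lAnnI_singleton.1 hu)]

theorem IsLeftPInjective.lSingular_subset_jacobson (hR : IsLeftPInjective R) :
    lSingular R ⊆ Ring.jacobson R := by
  refine fun z hz => op_mem_jacobson_iff.1 (mem_jacobson_iff_forall_left_inverse.2 fun r => ?_)
  obtain ⟨s, hs⟩ := (hR (1 - z * r.unop) 1).1 fun v hv => by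
    by_contra hne
    rw [mul_one] at hne
    obtain ⟨u, huv, huz⟩ := mem_lSingular_iff.1 hz v hne
    rw [mul_one_sub, sub_eq_zero] at hv
    exact huv (by rw [hv, ← mul_assoc, ← mul_assoc, huz, zero_mul])
  exact ⟨op s, unop_injective hs.symm⟩

theorem IsLeftCS.isVonNeumannRegular_quotient_jacobson (hcs : IsLeftCS R)
    (hp : IsLeftPInjective R) : IsVonNeumannRegular (R ⧸ Ring.jacobson R) :=
  _root_.isVonNeumannRegular_quotient_jacobson fun a =>
    (hcs.exists_sub_mem_lSingular hp a).imp fun _ h => hp.lSingular_subset_jacobson h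

end CS

section Nilpotence
variable {R : Type*} [Ring R]

theorem IsLeftPInjective.isNilpotent_jacobson [IsNoetherianRing R] (hR : IsLeftPInjective R) :
    IsNilpotent (Ring.jacobson R) := by
  obtain ⟨n, hn⟩ := monotone_stabilizes_iff_noetherian.2 ‹IsNoetherianRing R›
    ⟨fun n => lAnnI R (Ring.jacobson R ^ n : Ideal R),
      fun m n hmn => lAnnI_anti (Ideal.pow_le_pow_right hmn)⟩
  refine ⟨n, of_not_not fun hJn => ?_⟩
  have hne : {L | ∃ x ∉ lAnnI R (Ring.jacobson R ^ n : Ideal R), L = lAnnI R {x}}.Nonempty :=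
    ⟨_, 1, fun h => hJn ((Submodule.eq_bot_iff _).2 fun t ht => one_mul t ▸ h t ht), rfl⟩
  obtain ⟨_, ⟨x, hx, rfl⟩, hmax⟩ := set_has_maximal_iff_noetherian.2 ‹IsNoetherianRing R› _ hne
  obtain ⟨j, hj, hxj⟩ : ∃ j ∈ Ring.jacobson R, x * j ∉ lAnnI R (Ring.jacobson R ^ n : Ideal R) := by
    by_contra! hcon
    refine hx (show x ∈ lAnnI R (Ring.jacobson R ^ n : Ideal R) from
      (hn (n + 1) n.le_succ).ge fun t ht => ?_)
    change t ∈ Ring.jacobson R ^ (n + 1) at ht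
    rw [Ideal.IsTwoSided.pow_succ] at ht
    refine Submodule.mul_induction_on ht (fun j hj t ht => ?_) fun a b ha hb => ?_
    · rw [← mul_assoc, hcon j hj t ht]
    · rw [mul_add, ha, hb, add_zero]
  obtain ⟨s, hs⟩ := (hR (x * j) x).1 fun u hu => by
    by_contra hux
    refine hmax _ ⟨_, hxj, rfl⟩
      (SetLike.lt_iff_le_and_exists.2 ⟨fun v hv => ?_, u, by simpa, by simpa⟩)
    rw [mem_lAnnI_singleton] at hv ⊢
    rw [← mul_assoc, hv, zero_mul]
  have hx0 : x * (1 - j * s) = 0 := by rw [mul_one_sub, ← mul_assoc, ← hs, sub_self]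
  rw [(mem_jacobson_iff_forall_isUnit_right.1 hj s).mul_left_eq_zero] at hx0
  exact hx (hx0 ▸ zero_mem _)

theorem IsRightDual.isNilpotent_jacobson [IsNoetherian Rᵐᵒᵖ R] (hR : IsRightDual R) :
    IsNilpotent (Ring.jacobson R) := by
  obtain ⟨n, hn⟩ := monotone_stabilizes_iff_noetherian.2 ‹IsNoetherian Rᵐᵒᵖ R›
    ⟨fun n => toRIdeal (lAnnI R (Ring.jacobson R ^ n : Ideal R)),
      fun m n hmn => lAnnI_anti (Ideal.pow_le_pow_right hmn)⟩
  have hle : toRIdeal (Ring.jacobson R ^ n) ≤ toRIdeal (Ring.jacobson R ^ (n + 1)) := fun x hx =>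
    hR.mem_of_lAnnI_mul_eq_zero fun u hu => (hn (n + 1) n.le_succ).ge hu x hx
  have hbot : toRIdeal (Ring.jacobson R ^ n) = ⊥ := by
    refine Submodule.FG.eq_bot_of_le_jacobson_smul (IsNoetherian.noetherian _) fun x hx => ?_
    have hx' : x ∈ Ring.jacobson R ^ (n + 1) := hle hx
    rw [Submodule.pow_succ] at hx'
    exact Submodule.mul_induction_on hx' (fun a ha j hj =>
      Submodule.smul_mem_smul (op_mem_jacobson_iff.2 hj) ha) fun a b => add_mem
  exact ⟨n, (Submodule.eq_bot_iff _).2 fun x hx => (Submodule.mem_bot Rᵐᵒᵖ).1 (hbot ▸ hx)⟩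

end Nilpotence

section Kasch
variable {R : Type*} [Ring R]

/-- For a left ideal `I`, the right ideal of those `w` annihilated by the Jacobson radical on the
left and by `I` on the right, i.e. `r(J) ∩ l(I)`. -/
def annihilatedRIdeal (I : Ideal R) : RIdeal R :=
  rAnnI R (Ring.jacobson R : Set R) ⊓ toRIdeal (lAnnI R (I : Set R))

instance lAnnI_annihilatedRIdeal_isTwoSided (I : Ideal R) :
    (lAnnI R (annihilatedRIdeal I : Set R)).IsTwoSided :=
  ⟨fun b ha w hw => by
    rw [mul_assoc]
    refine ha _ ⟨fun j hj => ?_, (lAnnI R (I : Set R)).mul_mem_left b hw.2⟩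
    rw [← mul_assoc, hw.1 _ (Ideal.mul_mem_right b _ hj)]⟩

theorem jacobson_le_lAnnI_annihilatedRIdeal (I : Ideal R) :
    Ring.jacobson R ≤ lAnnI R (annihilatedRIdeal I : Set R) :=
  fun j hj _ hw => hw.1 j hj

theorem lAnnI_annihilatedRIdeal_mono {I I' : Ideal R} (h : I ≤ I') :
    lAnnI R (annihilatedRIdeal I : Set R) ≤ lAnnI R (annihilatedRIdeal I' : Set R) :=
  lAnnI_anti fun _ hw => ⟨hw.1, lAnnI_anti h hw.2⟩

theorem IsRightDual.le_of_lAnnI_annihilatedRIdeal_le [IsSemiprimaryRing R] (hR : IsRightDual R)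
    {I I' : Ideal R} [I.IsTwoSided] (hI : Ring.jacobson R ≤ I)
    (h : lAnnI R (annihilatedRIdeal I' : Set R) ≤ lAnnI R (annihilatedRIdeal I : Set R)) :
    I' ≤ I := by
  have hW : annihilatedRIdeal I ≤ annihilatedRIdeal I' := fun w hw =>
    hR.mem_of_lAnnI_mul_eq_zero fun u hu => h hu w hw
  refine fun y hy => mem_toRIdeal.1 (hR.mem_of_lAnnI_mul_eq_zero fun u hu => ?_)
  by_contra huy
  obtain ⟨s, hs, hJs⟩ :=
    exists_mul_ne_zero_forall_jacobson_mul_eq_zero IsSemiprimaryRing.isNilpotent huy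
  obtain ⟨c, hc, hcI'⟩ := exists_mem_forall_sub_mul_mem_jacobson I'
  have hsuy : s * (u * y) ∈ annihilatedRIdeal I := ⟨hJs, fun i hi => by
    rw [mul_assoc, mul_assoc, hu _ (I.mul_mem_left y hi), mul_zero]⟩
  have huyc : u * y = u * y * c := by
    rw [mul_assoc, ← sub_eq_zero, ← mul_sub]
    exact hu _ (hI (hcI' y hy))
  exact hs (by rw [huyc, ← mul_assoc, (hW hsuy).2 c hc])

theorem IsRightDual.lAnnI_rAnnI_jacobson_le [IsSemiprimaryRing R] [IsNoetherian Rᵐᵒᵖ R]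
    (hR : IsRightDual R) :
    lAnnI R (rAnnI R (Ring.jacobson R : Set R) : Set R) ≤ Ring.jacobson R := by
  -- `P` is a strictly increasing self-map of a poset with the ascending chain condition, so it
  -- cannot move the least element `J`.
  let α := {I : Ideal R // I.IsTwoSided ∧ Ring.jacobson R ≤ I}
  let J : α := ⟨Ring.jacobson R, inferInstance, le_rfl⟩
  let P : α → α := fun I => ⟨lAnnI R (annihilatedRIdeal I.1 : Set R), inferInstance,
    jacobson_le_lAnnI_annihilatedRIdeal I.1⟩
  have hP : StrictMono P := fun I I' hlt => lt_of_le_not_ge (lAnnI_annihilatedRIdeal_mono hlt.le)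
    fun hle => have := I.2.1; hlt.not_ge (hR.le_of_lAnnI_annihilatedRIdeal_le I.2.2 hle)
  have hα : StrictMono fun I : α => have := I.2.1; toRIdeal I.1 := fun _ _ hlt => hlt
  have : WellFoundedGT α := hα.wellFoundedGT
  have hfix : J = P J :=
    eq_of_le_of_not_lt (jacobson_le_lAnnI_annihilatedRIdeal _) (not_lt_apply_of_strictMono hP J)
  calc lAnnI R (rAnnI R (Ring.jacobson R : Set R) : Set R)
      ≤ lAnnI R (annihilatedRIdeal (Ring.jacobson R) : Set R) := lAnnI_anti fun _ hw => hw.1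
    _ = Ring.jacobson R := (congrArg Subtype.val hfix).symm

variable (R) in
/-- `R` is left Kasch if every simple left module embeds in `R`, i.e. every maximal left ideal is
annihilated on the right by a nonzero element. -/
def IsLeftKasch : Prop := ∀ m : Ideal R, m.IsMaximal → ∃ w : R, w ≠ 0 ∧ ∀ x ∈ m, x * w = 0

theorem isLeftKasch_of_lAnnI_rAnnI_jacobson_le [IsSemisimpleRing (R ⧸ Ring.jacobson R)]
    (h : lAnnI R (rAnnI R (Ring.jacobson R : Set R) : Set R) ≤ Ring.jacobson R) :
    IsLeftKasch R := by
  intro m hm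
  obtain ⟨c, hc, hmc⟩ := exists_mem_forall_sub_mul_mem_jacobson m
  have hcJ : 1 - c ∉ Ring.jacobson R := fun hcJ => hm.ne_top <| (Ideal.eq_top_iff_one m).2 <|
    sub_add_cancel 1 c ▸ add_mem (Ring.jacobson_le_of_isMaximal m hcJ) hc
  obtain ⟨s, hs, hcs⟩ : ∃ s ∈ rAnnI R (Ring.jacobson R : Set R), (1 - c) * s ≠ 0 := by
    simpa [mem_lAnnI] using mt (@h (1 - c)) hcJ
  refine ⟨_, hcs, fun x hx => ?_⟩
  rw [← mul_assoc, mul_one_sub]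
  exact hs _ (hmc x hx)

theorem IsRightDual.isLeftKasch [IsSemiprimaryRing R] [IsNoetherian Rᵐᵒᵖ R]
    (hR : IsRightDual R) : IsLeftKasch R :=
  isLeftKasch_of_lAnnI_rAnnI_jacobson_le hR.lAnnI_rAnnI_jacobson_le

end Kasch

section Mininjective
variable {R : Type*} [Ring R]

theorem RIdeal.exists_mul_eq_of_isSimpleModule {I : RIdeal R} [IsSimpleModule Rᵐᵒᵖ I] {x y : R}
    (hx : x ∈ I) (hx0 : x ≠ 0) (hy : y ∈ I) : ∃ v, x * v = y := by
  obtain ⟨v, hv⟩ := IsSimpleModule.toSpanSingleton_surjective Rᵐᵒᵖ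
    (m := (⟨x, hx⟩ : I)) (fun h => hx0 (congrArg Subtype.val h)) ⟨y, hy⟩
  exact ⟨v.unop, congrArg Subtype.val hv⟩

theorem IsLeftKasch.isMaximal_lAnnI_singleton (hK : IsLeftKasch R) (hp : IsLeftPInjective R)
    {I : RIdeal R} [IsSimpleModule Rᵐᵒᵖ I] {y : R} (hy : y ∈ I) (hy0 : y ≠ 0) :
    (lAnnI R {y}).IsMaximal := by
  obtain ⟨m, hm, hle⟩ := Ideal.exists_le_maximal (lAnnI R {y}) fun h => hy0 <| by
    simpa using (h ▸ Submodule.mem_top : (1 : R) ∈ lAnnI R {y})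
  obtain ⟨w, hw0, hmw⟩ := hK m hm
  obtain ⟨t, rfl⟩ := (hp y w).1 fun u hu => hmw u (hle (mem_lAnnI_singleton.2 hu))
  obtain ⟨v, hv⟩ := RIdeal.exists_mul_eq_of_isSimpleModule (I.mul_mem_right hy t) hw0 hy
  have hmy : m ≤ lAnnI R {y} := fun x hx => mem_lAnnI_singleton.2 <| by
    rw [← hv, ← mul_assoc, hmw x hx, zero_mul]
  exact hle.antisymm hmy ▸ hm

theorem IsLeftCS.exists_mul_mem_span_singleton (hcs : IsLeftCS R) {y y' : R} (hy' : y' ≠ 0)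
    (h : ∀ u, y * u = 0 → y' * u = 0) : ∃ u, u * y' ∈ Ideal.span {y} ∧ u * y' ≠ 0 := by
  obtain ⟨e, -, hye, hess⟩ := hcs.exists_idempotent (Ideal.span {y})
  refine hess y' hy' ?_
  have hy'e := h (1 - e) (by rw [mul_one_sub, hye y (Ideal.mem_span_singleton_self y), sub_self])
  rwa [mul_one_sub, sub_eq_zero, eq_comm] at hy'e

theorem exists_mul_eq_of_isMaximal_lAnnI_singleton {y u : R} (hy : (lAnnI R {y}).IsMaximal)
    (hu : u * y ≠ 0) : ∃ a, a * (u * y) = y := by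
  obtain ⟨a, p, hp, hap⟩ := hy.exists_inv (mt mem_lAnnI_singleton.1 hu)
  refine ⟨a, ?_⟩
  rw [← mul_assoc, eq_sub_of_add_eq hap, one_sub_mul, mem_lAnnI_singleton.1 hp, sub_zero]

theorem IsLeftKasch.isRightMininjective (hK : IsLeftKasch R) (hp : IsLeftPInjective R)
    (hcs : IsLeftCS R) : IsRightMininjective R := by
  intro I hI f
  rcases LinearMap.injective_or_eq_zero f with hf | rfl
  swap
  · exact ⟨0, fun x => (zero_mul (x : R)).symm⟩
  have hrange : IsSimpleModule Rᵐᵒᵖ (LinearMap.range f) :=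
    IsSimpleModule.congr (LinearEquiv.ofInjective f hf).symm
  have := IsSimpleModule.nontrivial Rᵐᵒᵖ I
  obtain ⟨y, hy0⟩ := exists_ne (0 : I)
  have hfy0 : f y ≠ 0 := (map_ne_zero_iff f hf).2 hy0
  have hfmul : ∀ v, f (op v • y) = f y * v := fun v => f.map_smul (op v) y
  obtain ⟨u, hu, hu0⟩ := hcs.exists_mul_mem_span_singleton (y := y) hfy0 fun v hv => by
    rw [← hfmul, show op v • y = 0 from Subtype.ext hv, map_zero]
  obtain ⟨b, hb⟩ := Ideal.mem_span_singleton'.1 hu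
  obtain ⟨a, ha⟩ := exists_mul_eq_of_isMaximal_lAnnI_singleton
    (hK.isMaximal_lAnnI_singleton hp (LinearMap.mem_range_self f y) hfy0) hu0
  refine ⟨a * b, fun x => ?_⟩
  obtain ⟨v, hv⟩ := RIdeal.exists_mul_eq_of_isSimpleModule y.2 (fun h => hy0 (Subtype.ext h)) x.2
  obtain rfl : op v • y = x := Subtype.ext hv
  rw [hfmul, ← hv, ← mul_assoc, mul_assoc a, hb, ha]

end Mininjective

section LeftDual
variable {R : Type*} [Ring R]

theorem IsRightDual.exists_isSimpleModule_map_mulLeft [IsNoetherian Rᵐᵒᵖ R] (hR : IsRightDual R)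
    {N : RIdeal R} (hN : N ≠ ⊥) :
    ∃ s : R, IsSimpleModule Rᵐᵒᵖ (N.map (LinearMap.mulLeft Rᵐᵒᵖ s)) := by
  have : Nontrivial N := Submodule.nontrivial_iff_ne_bot.2 hN
  obtain ⟨M, hM⟩ := IsCoatomic.exists_coatom (Submodule Rᵐᵒᵖ N)
  obtain ⟨s, hsM, y, hy, hsy⟩ : ∃ s ∈ lAnnI R (M.map N.subtype : Set R), ∃ y ∈ N, s * y ≠ 0 := by
    by_contra! hcon
    refine hM.1 (eq_top_iff.2 fun y _ => ?_)
    obtain ⟨z, hz, hzy⟩ := hR.mem_of_lAnnI_mul_eq_zero (T := M.map N.subtype)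
      fun u hu => hcon u hu y y.2
    rwa [← Subtype.ext hzy]
  let f : N →ₗ[Rᵐᵒᵖ] R := (LinearMap.mulLeft Rᵐᵒᵖ s).domRestrict N
  have hker : LinearMap.ker f = M := by
    refine ((hM.le_iff_eq fun h => hsy ?_).1 fun x hx => ?_)
    · exact LinearMap.congr_fun (LinearMap.ker_eq_top.1 h) ⟨y, hy⟩
    · exact hsM x ⟨x, hx, rfl⟩
  refine ⟨s, ?_⟩
  have : IsSimpleModule Rᵐᵒᵖ (N ⧸ LinearMap.ker f) := isSimpleModule_iff_isCoatom.2 (hker ▸ hM)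
  rw [← LinearMap.range_domRestrict]
  exact IsSimpleModule.congr f.quotKerEquivRange.symm

theorem IsRightMininjective.exists_sub_mul_mem_lAnnI (hR : IsRightMininjective R) {T : RIdeal R}
    {b c : R} [IsSimpleModule Rᵐᵒᵖ (T.map (LinearMap.mulLeft Rᵐᵒᵖ b))]
    (hc : c ∈ lAnnI R (T ⊓ rAnnI R {b} : RIdeal R)) : ∃ r, c - r * b ∈ lAnnI R (T : Set R) := by
  obtain ⟨φ, hφ⟩ := exists_linearMap_range_of_ker_le
    (f := (LinearMap.mulLeft Rᵐᵒᵖ b).domRestrict T) (g := (LinearMap.mulLeft Rᵐᵒᵖ c).domRestrict T)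
    fun t ht => hc t ⟨t.2, by simpa [mem_rAnnI] using ht⟩
  obtain ⟨r, hr⟩ := hR _ (by rwa [LinearMap.range_domRestrict]) φ
  refine ⟨r, fun t ht => ?_⟩
  have hct : c * t = r * (b * t) := (hφ ⟨t, ht⟩).symm.trans (hr _)
  rw [sub_mul, mul_assoc, hct, sub_self]

theorem IsRightDual.isLeftDual [IsNoetherian Rᵐᵒᵖ R] [IsArtinian Rᵐᵒᵖ R] (hR : IsRightDual R)
    (hmin : IsRightMininjective R) : IsLeftDual R := by
  intro L
  -- If `b₀ T ≠ 0` for some `b₀ ∈ L`, then `s b₀ T` is simple for some `s`, and mininjectivity shows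
  -- that `T ∩ r(s b₀)`, which is smaller than `T`, still has its left annihilator inside `L`.
  obtain ⟨T, hTL, hT⟩ := exists_minimal_of_wellFoundedLT
    (fun T : RIdeal R => lAnnI R (T : Set R) ≤ L) ⟨⊤, fun u hu =>
      (mul_one u).symm.trans (hu 1 trivial) ▸ L.zero_mem⟩
  suffices hLT : T ≤ rAnnI R (L : Set R) from
    le_antisymm ((lAnnI_anti hLT).trans hTL) fun x hx t ht => ht x hx
  intro t ht b₀ hb₀
  by_contra hbt
  obtain ⟨s, hs⟩ := hR.exists_isSimpleModule_map_mulLeft (N := T.map (LinearMap.mulLeft Rᵐᵒᵖ b₀))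
    ((Submodule.ne_bot_iff _).2 ⟨_, ⟨t, ht, rfl⟩, hbt⟩)
  rw [← Submodule.map_comp, ← LinearMap.mulLeft_mul] at hs
  have hbL : s * b₀ ∈ L := L.mul_mem_left s hb₀
  have hlt : ¬ T ≤ T ⊓ rAnnI R {s * b₀} := fun hle => by
    have hker : T ≤ LinearMap.ker (LinearMap.mulLeft Rᵐᵒᵖ (s * b₀)) := fun x hx => (hle hx).2 _ rfl
    exact (isSimpleModule_iff_isAtom.1 hs).1 (LinearMap.le_ker_iff_map.1 hker)
  obtain ⟨c, hc, hcL⟩ := SetLike.not_le_iff_exists.1 fun h => hlt (hT h inf_le_left)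
  obtain ⟨r, hr⟩ := hmin.exists_sub_mul_mem_lAnnI hc
  exact hcL (sub_add_cancel c (r * (s * b₀)) ▸ add_mem (hTL hr) (L.mul_mem_left r hbL))

end LeftDual

section QF
variable {R : Type*} [Ring R]

theorem IsLeftDual.isNoetherianRing [IsArtinian Rᵐᵒᵖ R] (hR : IsLeftDual R) :
    IsNoetherianRing R := by
  have hanti : StrictAnti fun L : Ideal R => rAnnI R (L : Set R) := fun L L' hlt =>
    lt_of_le_not_ge (rAnnI_anti hlt.le) fun hle => hlt.not_ge fun x hx =>
      hR.mem_of_mul_rAnnI_eq_zero fun u hu => hle hu x hx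
  exact isNoetherian_iff'.2 hanti.wellFoundedGT

/-- Every linear map `f : I → R` on the left ideal `I` is right multiplication by an element of
`R`. -/
def HomsAreRightMul (I : Ideal R) : Prop := ∀ f : I →ₗ[R] R, ∃ c : R, ∀ x : I, f x = x * c

theorem IsLeftPInjective.homsAreRightMul_span_singleton (hR : IsLeftPInjective R) (a : R) :
    HomsAreRightMul (Ideal.span {a}) := by
  intro f
  let a' : Ideal.span {a} := ⟨a, Ideal.mem_span_singleton_self a⟩
  have hf : ∀ u, f (u • a') = u * f a' := fun u => f.map_smul u a'
  obtain ⟨c, hc⟩ := (hR a (f a')).1 fun u hu => by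
    rw [← hf, ← map_zero f]
    exact congrArg f (Subtype.ext hu)
  refine ⟨c, fun ⟨x, hx⟩ => ?_⟩
  obtain ⟨u, rfl⟩ := Ideal.mem_span_singleton'.1 hx
  rw [mul_assoc, ← hc, ← hf]
  rfl

theorem IsLeftDual.mem_rAnnI_sup_rAnnI (hl : IsLeftDual R) (hr : IsRightDual R) {A B : Ideal R}
    {d : R} (hd : ∀ x ∈ A, x ∈ B → x * d = 0) : d ∈ rAnnI R (A : Set R) ⊔ rAnnI R (B : Set R) :=
  hr.mem_of_lAnnI_mul_eq_zero fun u hu => hd u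
    (hl.mem_of_mul_rAnnI_eq_zero fun v hv => hu v (Submodule.mem_sup_left hv))
    (hl.mem_of_mul_rAnnI_eq_zero fun v hv => hu v (Submodule.mem_sup_right hv))

theorem HomsAreRightMul.sup (hl : IsLeftDual R) (hr : IsRightDual R) {A B : Ideal R}
    (hA : HomsAreRightMul A) (hB : HomsAreRightMul B) : HomsAreRightMul (A ⊔ B) := by
  intro f
  obtain ⟨c, hc⟩ := hA (f ∘ₗ Submodule.inclusion le_sup_left)
  obtain ⟨d, hd⟩ := hB (f ∘ₗ Submodule.inclusion le_sup_right)
  obtain ⟨p, hp, q, hq, hpq⟩ := Submodule.mem_sup.1 <|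
    hl.mem_rAnnI_sup_rAnnI hr (A := A) (B := B) (d := c - d) fun x hxA hxB => by
      rw [mul_sub, ← hc ⟨x, hxA⟩, ← hd ⟨x, hxB⟩]
      exact sub_self _
  have hcd : c - p = d + q := by rw [sub_eq_iff_eq_add, add_assoc, add_comm q, hpq, add_sub_cancel]
  refine ⟨c - p, fun ⟨x, hx⟩ => ?_⟩
  obtain ⟨a, ha, b, hb, rfl⟩ := Submodule.mem_sup.1 hx
  calc f ⟨a + b, hx⟩
      = f (Submodule.inclusion le_sup_left ⟨a, ha⟩) +
          f (Submodule.inclusion le_sup_right ⟨b, hb⟩) := by rw [← map_add]; rfl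
    _ = a * c + b * d := congrArg₂ (· + ·) (hc ⟨a, ha⟩) (hd ⟨b, hb⟩)
    _ = a * (c - p) + b * (d + q) := by rw [mul_sub, hp a ha, sub_zero, mul_add, hq b hb, add_zero]
    _ = (a + b) * (c - p) := by rw [hcd, add_mul]

theorem IsLeftDual.homsAreRightMul_of_fg (hl : IsLeftDual R) (hr : IsRightDual R) {I : Ideal R}
    (hI : I.FG) : HomsAreRightMul I := by
  induction I, hI using Submodule.fg_induction with
  | singleton a => exact hr.isLeftPInjective.homsAreRightMul_span_singleton a
  | sup A B _ _ hA hB => exact hA.sup hl hr hB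

theorem IsLeftDual.injective [IsNoetherianRing R] (hl : IsLeftDual R) (hr : IsRightDual R) :
    Module.Injective R R :=
  Module.Baer.injective fun I f =>
    (hl.homsAreRightMul_of_fg hr (IsNoetherian.noetherian I) f).elim fun c hc =>
      ⟨LinearMap.toSpanSingleton R R c, fun x hx => (hc ⟨x, hx⟩).symm⟩

end QF

section Injective
variable {R M : Type*} [Ring R] [AddCommGroup M] [Module R M]

theorem exists_linearMap_eqOn_id_of_disjoint [Module.Injective R M] {K C : Submodule R M}
    (h : Disjoint K C) : ∃ g : M →ₗ[R] M, (∀ x ∈ K, g x = x) ∧ C ≤ LinearMap.ker g := by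
  obtain ⟨g, hg⟩ := Module.Injective.out (C.mkQ ∘ₗ K.subtype)
    (LinearMap.ker_eq_bot.1 <| by
      rw [LinearMap.ker_comp, C.ker_mkQ]
      exact Submodule.disjoint_iff_comap_eq_bot.1 h)
    K.subtype
  exact ⟨g ∘ₗ C.mkQ, fun x hx => hg ⟨x, hx⟩, C.ker_mkQ.ge.trans (LinearMap.ker_le_ker_comp _ _)⟩

theorem exists_isCompl_essential_of_injective [Module.Injective R M] (I : Submodule R M) :
    ∃ K K' : Submodule R M, IsCompl K K' ∧ I ≤ K ∧ ∀ L ≤ K, L ⊓ I = ⊥ → L = ⊥ := by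
  obtain ⟨C, -, hC⟩ := exists_le_maximal_disjoint (disjoint_bot_left : Disjoint ⊥ I)
  obtain ⟨K, hIK, hK⟩ := exists_le_maximal_disjoint hC.1.symm
  obtain ⟨g, hgK, hgC⟩ := exists_linearMap_eqOn_id_of_disjoint hK.1
  have hrangeC : Disjoint (LinearMap.range g) C := by
    have hcomap : Disjoint (C.comap g) I := Submodule.disjoint_def.2 fun x hxC hxI =>
      Submodule.disjoint_def.1 hC.1 x (hgK x (hIK hxI) ▸ hxC) hxI
    refine Submodule.disjoint_def.2 ?_
    rintro _ ⟨x, rfl⟩ hx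
    exact hgC (hC.2 hcomap (fun c hc => by simp [LinearMap.mem_ker.1 (hgC hc)]) hx)
  have hrange : LinearMap.range g ≤ K := hK.2 hrangeC fun x hx => ⟨x, hgK x hx⟩
  have hcompl := LinearMap.isCompl_of_proj
    (f := g.codRestrict K fun x => hrange ⟨x, rfl⟩) fun x => Subtype.ext (hgK x x.2)
  exact ⟨K, _, hcompl, hIK, fun L hLK hLI =>
    eq_bot_of_maximal_disjoint hC hK.1 hIK hLK (disjoint_iff.2 hLI)⟩

end Injective

section SelfInjective
variable {R : Type*} [Ring R]

theorem isLeftCS_of_injective [Module.Injective R R] : IsLeftCS R := fun I =>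
  let ⟨K, K', hK, hIK, hess⟩ := exists_isCompl_essential_of_injective I
  ⟨K, ⟨K', hK⟩, hIK, hess⟩

theorem mem_lAnnI_span {s : Set R} {u : R} :
    u ∈ lAnnI R (Submodule.span Rᵐᵒᵖ s : Set R) ↔ ∀ x ∈ s, u * x = 0 :=
  Submodule.span_le (p := LinearMap.ker (LinearMap.mulLeft Rᵐᵒᵖ u))

theorem rAnnI_lAnnI_of_fg [Module.Injective R R] {T : RIdeal R} (hT : T.FG) :
    rAnnI R (lAnnI R (T : Set R) : Set R) = T := by
  classical
  obtain ⟨s, rfl⟩ := hT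
  refine le_antisymm (fun x hx => ?_) fun x hx u hu => hu x hx
  let φ : R →ₗ[R] s → R := LinearMap.pi fun i => LinearMap.toSpanSingleton R R (i : R)
  obtain ⟨ψ, hψ⟩ := exists_linearMap_range_of_ker_le (f := φ)
    (g := LinearMap.toSpanSingleton R R x) fun u hu =>
      hx u (mem_lAnnI_span.2 fun y hy => congrFun (LinearMap.mem_ker.1 hu) ⟨y, hy⟩)
  obtain ⟨g, hg⟩ := Module.Injective.out (LinearMap.range φ).subtype Subtype.val_injective ψ
  have hx_eq : x = ∑ i : s, (i : R) * g fun j => if i = j then 1 else 0 := by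
    calc x = g (φ 1) := by simpa using ((hg (φ.rangeRestrict 1)).trans (hψ 1)).symm
      _ = ∑ i : s, (i : R) * g fun j => if i = j then 1 else 0 := by
        rw [LinearMap.pi_apply_eq_sum_univ g]
        simp [φ]
  rw [hx_eq]
  exact sum_mem fun i _ => RIdeal.mul_mem_right _ (Submodule.subset_span i.2) _

theorem isLeftPInjective_of_injective [Module.Injective R R] : IsLeftPInjective R :=
  isLeftPInjective_of_span_singleton fun a => rAnnI_lAnnI_of_fg (Submodule.fg_span_singleton a)

theorem isArtinianRing_of_injective [IsNoetherianRing R] [Module.Injective R R] :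
    IsArtinianRing R := by
  have hp : IsLeftPInjective R := isLeftPInjective_of_injective
  have := (isLeftCS_of_injective.isVonNeumannRegular_quotient_jacobson hp).isSemiprimaryRing
    hp.isNilpotent_jacobson
  exact IsSemiprimaryRing.isNoetherian_iff_isArtinian.1 ‹_›

theorem isNoetherian_mulOpposite_of_injective [IsArtinianRing R] [Module.Injective R R] :
    IsNoetherian Rᵐᵒᵖ R := by
  have hanti : StrictAnti fun T : {T : RIdeal R // T.FG} => lAnnI R (T.1 : Set R) :=
    fun T T' hlt => lt_of_le_not_ge (lAnnI_anti hlt.le) fun hle => hlt.not_ge fun x hx => by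
      rw [← rAnnI_lAnnI_of_fg T.2]
      exact fun u hu => hle hu x hx
  exact isNoetherian_iff_fg_wellFounded.2 hanti.wellFoundedGT

theorem IsQuasiFrobenius.isRightJohns (hR : IsQuasiFrobenius R) : IsRightJohns R := by
  obtain ⟨_, _⟩ := hR
  have := isArtinianRing_of_injective (R := R)
  have := isNoetherian_mulOpposite_of_injective (R := R)
  exact isRightJohns_iff.2 ⟨this, fun T => rAnnI_lAnnI_of_fg (IsNoetherian.noetherian T)⟩

end SelfInjective

section Johns
variable {R : Type*} [Ring R]

theorem IsRightJohns.isSemiprimaryRing (hJ : IsRightJohns R) (hcs : IsLeftCS R) :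
    IsSemiprimaryRing R := by
  obtain ⟨_, hr⟩ := isRightJohns_iff.1 hJ
  have := hJ.1
  exact (hcs.isVonNeumannRegular_quotient_jacobson hr.isLeftPInjective)
    |>.isSemiprimaryRing_of_mulOpposite hr.isNilpotent_jacobson

theorem IsRightJohns.isQuasiFrobenius (hJ : IsRightJohns R) (hcs : IsLeftCS R) :
    IsQuasiFrobenius R := by
  obtain ⟨hnoeth, hr⟩ := isRightJohns_iff.1 hJ
  have := hJ.isSemiprimaryRing hcs
  have : IsArtinian Rᵐᵒᵖ R := IsSemiprimaryRing.isNoetherian_iff_isArtinian.1 hnoeth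
  have hl : IsLeftDual R :=
    hr.isLeftDual (hr.isLeftKasch.isRightMininjective hr.isLeftPInjective hcs)
  have := hl.isNoetherianRing
  exact ⟨this, hl.injective hr⟩

end Johns

/-- `R` is QF iff `R` is right Johns and left CS. -/
theorem stmt11 (R : Type*) [Ring R] :
    IsQuasiFrobenius R ↔ (IsRightJohns R ∧ IsLeftCS R) :=
  ⟨fun hR => ⟨hR.isRightJohns, have := hR.2; isLeftCS_of_injective⟩,
    fun hR => hR.1.isQuasiFrobenius hR.2⟩
end

section
/- If R is a right simple injective ring with ACC on right annihilators in which the right socle S_r is essential as a right ideal, then R is quasi-Frobenius. -/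
/-!
The left annihilator `Z` of the right socle is a two-sided ideal. As every nonzero right ideal
contains a minimal one, the ascending chain condition makes `Z` nilpotent. Right simple injectivity
makes `Rk` simple whenever `kR` is minimal, and the chain condition exhibits `Z` as the annihilator
of finitely many such `k`; so `R ⧸ Z` embeds in a finite product of simple left modules, is
semisimple, and `R` is semiprimary.

Sending `I` to the right annihilator of the socle of its own right annihilator reflects inclusions
between two-sided ideals containing `Z`. Were `Z` strictly below its image, iterating the map would
give a strictly ascending chain of right annihilators. Hence `Z` is fixed, and so every
simple right module embeds in `R`.

With this right Kasch property, simple injectivity turns every right ideal into a right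
annihilator, so `R` is right noetherian, hence right artinian, and induction on length
extends simple injectivity to right self-injectivity. Now `R` is an injective cogenerator on the
right, and duality transfers both conditions to the left.
-/

open MulOpposite

section Module

variable {A M P Q : Type*} [Ring A] [AddCommGroup M] [Module A M] [AddCommGroup P] [Module A P]
  [AddCommGroup Q] [Module A Q]

theorem isSimpleModule_span_singleton_iff {m : M} :
    IsSimpleModule A (Submodule.span A {m}) ↔
      m ≠ 0 ∧ ∀ a : A, a • m ≠ 0 → ∃ b : A, b • a • m = m := by
  rw [isSimpleModule_iff_isAtom]
  constructor
  · intro hm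
    refine ⟨by simpa using hm.1, fun a ha => ?_⟩
    have hspan : Submodule.span A {a • m} = Submodule.span A {m} :=
      (hm.le_iff.1 (Submodule.span_singleton_smul_le A a m)).resolve_left (by simpa using ha)
    exact Submodule.mem_span_singleton.1 (hspan ▸ Submodule.mem_span_singleton_self m)
  · rintro ⟨hm, hcyclic⟩
    refine ⟨by simpa using hm, fun N hN => ?_⟩
    by_contra hN0
    obtain ⟨n, hn, hn0⟩ := Submodule.exists_mem_ne_zero_of_ne_bot hN0
    obtain ⟨a, rfl⟩ := Submodule.mem_span_singleton.1 (hN.le hn)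
    obtain ⟨b, hb⟩ := hcyclic a hn0
    exact hN.not_ge ((Submodule.span_singleton_le_iff_mem m N).2 (hb ▸ N.smul_mem b hn))

theorem exists_map_range_of_ker_le_ker {g : M →ₗ[A] P} {h : M →ₗ[A] Q}
    (hgh : LinearMap.ker g ≤ LinearMap.ker h) :
    ∃ f : LinearMap.range g →ₗ[A] Q, ∀ m, f ⟨g m, m, rfl⟩ = h m := by
  refine ⟨(LinearMap.ker g).liftQ h hgh ∘ₗ g.quotKerEquivRange.symm, fun m => ?_⟩
  rw [LinearMap.comp_apply, LinearEquiv.coe_coe]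
  exact congrArg _ (g.quotKerEquivRange_symm_apply_image m ⟨m, rfl⟩)

theorem eq_zero_or_isSimpleModule_range_of_isCoatom_le_ker {N : Submodule A M} (hN : IsCoatom N)
    {f : M →ₗ[A] P} (hf : N ≤ LinearMap.ker f) :
    f = 0 ∨ IsSimpleModule A (LinearMap.range f) := by
  rcases hN.le_iff.1 hf with htop | hker
  · exact .inl (LinearMap.ker_eq_top.1 htop)
  · have := isSimpleModule_iff_isCoatom.2 (hker ▸ hN)
    exact .inr (IsSimpleModule.congr f.quotKerEquivRange.symm)

theorem exists_comp_eq_of_baer_of_ker_le_ker {g : M →ₗ[A] P} {h : M →ₗ[A] Q}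
    (hQ : Module.Baer A Q) (hgh : LinearMap.ker g ≤ LinearMap.ker h) :
    ∃ φ : P →ₗ[A] Q, φ ∘ₗ g = h := by
  obtain ⟨f, hf⟩ := exists_map_range_of_ker_le_ker hgh
  obtain ⟨φ, hφ⟩ := hQ.extension_property (LinearMap.range g).subtype Subtype.val_injective f
  exact ⟨φ, LinearMap.ext fun m => (LinearMap.congr_fun hφ ⟨g m, m, rfl⟩).trans (hf m)⟩

end Module

theorem isNilpotent_of_mem_of_isNilpotent {A : Type*} [Semiring A] {I : Ideal A}
    (hI : IsNilpotent I) {x : A} (hx : x ∈ I) : IsNilpotent x := by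
  obtain ⟨n, hn⟩ := hI
  refine ⟨n, ?_⟩
  have hpow : x ^ n ∈ I ^ n := Ideal.pow_mem_pow hx n
  rwa [hn] at hpow

section SimpleInjective

variable {R : Type*} [Ring R]

/-- `k` generates a minimal right ideal `kR`. -/
def IsRightMinimal (k : R) : Prop := IsSimpleModule Rᵐᵒᵖ (Submodule.span Rᵐᵒᵖ {k})

theorem isRightMinimal_iff {k : R} :
    IsRightMinimal k ↔ k ≠ 0 ∧ ∀ r : R, k * r ≠ 0 → ∃ s : R, k * r * s = k := by
  rw [IsRightMinimal, isSimpleModule_span_singleton_iff]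
  exact and_congr_right fun _ => op_surjective.forall.trans
    (forall_congr' fun r => imp_congr_right fun _ => op_surjective.exists)

theorem range_mulLeft (a : R) :
    LinearMap.range (LinearMap.mulLeft Rᵐᵒᵖ a) = Submodule.span Rᵐᵒᵖ {a} :=
  SetLike.ext fun _ => (Submodule.mem_span_singleton.trans op_surjective.exists).symm

namespace IsRightMinimal

variable {k : R}

theorem ne_zero (hk : IsRightMinimal k) : k ≠ 0 := (isRightMinimal_iff.1 hk).1

theorem exists_mul_mul_eq (hk : IsRightMinimal k) {r : R} (hr : k * r ≠ 0) :
    ∃ s : R, k * r * s = k :=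
  (isRightMinimal_iff.1 hk).2 r hr

theorem mul_right (hk : IsRightMinimal k) {r : R} (hr : k * r ≠ 0) : IsRightMinimal (k * r) := by
  refine isRightMinimal_iff.2 ⟨hr, fun t ht => ?_⟩
  obtain ⟨s, hs⟩ := hk.exists_mul_mul_eq (r := r * t) (by rwa [← mul_assoc])
  exact ⟨s * r, by rw [← mul_assoc, mul_assoc k r t, hs]⟩

theorem mul_left (hk : IsRightMinimal k) {a : R} (ha : a * k ≠ 0) : IsRightMinimal (a * k) := by
  refine isRightMinimal_iff.2 ⟨ha, fun t ht => ?_⟩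
  rw [mul_assoc] at ht
  obtain ⟨s, hs⟩ := hk.exists_mul_mul_eq (right_ne_zero_of_mul ht)
  exact ⟨s, by rw [mul_assoc, mul_assoc, ← mul_assoc k, hs]⟩

theorem mul_eq_zero_of_forall_mul_eq_zero (hk : IsRightMinimal k) {y : R} (hy : y ≠ 0)
    (hky : ∀ r, k * r = 0 → y * r = 0) {r : R} (hr : y * r = 0) : k * r = 0 := by
  by_contra hkr
  obtain ⟨s, hs⟩ := hk.exists_mul_mul_eq hkr
  have hyrs : y * (r * s - 1) = 0 := hky _ (by rw [mul_sub, ← mul_assoc, hs, mul_one, sub_self])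
  rw [mul_sub, ← mul_assoc, hr, zero_mul, mul_one, zero_sub, neg_eq_zero] at hyrs
  exact hy hyrs

theorem mul_eq_zero_of_isNilpotent (hk : IsRightMinimal k) {I : Ideal R} [I.IsTwoSided]
    (hI : IsNilpotent I) {z : R} (hz : z ∈ I) : k * z = 0 := by
  by_contra hkz
  obtain ⟨s, hs⟩ := hk.exists_mul_mul_eq hkz
  obtain ⟨n, hpow⟩ := isNilpotent_of_mem_of_isNilpotent hI (I.mul_mem_right s hz)
  have hfix (m : ℕ) : k * (z * s) ^ m = k := by
    induction m with
    | zero => rw [pow_zero, mul_one]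
    | succ m ih => rw [pow_succ, ← mul_assoc, ih, ← mul_assoc, hs]
  exact hk.ne_zero (by rw [← hfix n, hpow, mul_zero])

end IsRightMinimal

namespace IsRightSimpleInjective

variable {P : Type*} [AddCommGroup P] [Module Rᵐᵒᵖ P]

theorem exists_eq_mul (hsi : IsRightSimpleInjective R) {g h : P →ₗ[Rᵐᵒᵖ] R}
    (hgh : LinearMap.ker g ≤ LinearMap.ker h) (hh : IsSimpleModule Rᵐᵒᵖ (LinearMap.range h)) :
    ∃ c : R, ∀ p, h p = c * g p := by
  obtain ⟨f, hf⟩ := exists_map_range_of_ker_le_ker hgh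
  have hcomp : h = f ∘ₗ g.rangeRestrict := LinearMap.ext fun p => (hf p).symm
  have hrange : LinearMap.range f = LinearMap.range h := by
    rw [hcomp, LinearMap.range_comp_of_range_eq_top _ g.range_rangeRestrict]
  obtain ⟨c, hc⟩ := hsi _ f (hrange ▸ hh)
  exact ⟨c, fun p => (hf p).symm.trans (hc _)⟩

theorem exists_eq_mul_of_forall_mul_eq_zero (hsi : IsRightSimpleInjective R) {k y : R}
    (hk : IsRightMinimal k) (hy : y ≠ 0) (hky : ∀ r, k * r = 0 → y * r = 0) :
    ∃ c : R, k = c * y := by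
  obtain ⟨c, hc⟩ := hsi.exists_eq_mul (g := LinearMap.mulLeft Rᵐᵒᵖ y)
    (h := LinearMap.mulLeft Rᵐᵒᵖ k) (fun r hr => hk.mul_eq_zero_of_forall_mul_eq_zero hy hky hr)
    ((range_mulLeft k).symm ▸ hk)
  exact ⟨c, by simpa using hc 1⟩

theorem isSimpleModule_span_singleton (hsi : IsRightSimpleInjective R) {k : R}
    (hk : IsRightMinimal k) : IsSimpleModule R (Submodule.span R {k}) := by
  refine isSimpleModule_span_singleton_iff.2 ⟨hk.ne_zero, fun a ha => ?_⟩
  obtain ⟨c, hc⟩ := hsi.exists_eq_mul_of_forall_mul_eq_zero hk ha fun r hr => by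
    rw [smul_eq_mul, mul_assoc, hr, mul_zero]
  exact ⟨c, hc.symm⟩

end IsRightSimpleInjective

theorem exists_isRightMinimal_mul (hess : IsEssentialRIdeal R (rSocle R)) {a : R} (ha : a ≠ 0) :
    ∃ x : R, IsRightMinimal (a * x) := by
  have hsocle : IsSemisimpleModule Rᵐᵒᵖ (rSocle R) := by
    rw [rSocle, sSup_eq_iSup]
    exact isSemisimpleModule_biSup_of_isSemisimpleModule_submodule fun m hm =>
      have : IsSimpleModule Rᵐᵒᵖ m := hm
      inferInstance
  let T : RIdeal R := Submodule.span Rᵐᵒᵖ {a}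
  have hT : T ⊓ rSocle R ≠ ⊥ := fun h => ha (Submodule.span_singleton_eq_bot.1 (hess T h))
  have : IsSemisimpleModule Rᵐᵒᵖ ↥(T ⊓ rSocle R) :=
    .of_injective (Submodule.inclusion inf_le_right) (Submodule.inclusion_injective _)
  obtain ⟨m, hmT, hm⟩ :=
    (IsSemisimpleModule.eq_bot_or_exists_simple_le (T ⊓ rSocle R)).resolve_left hT
  have hatom := isSimpleModule_iff_isAtom.1 hm
  obtain ⟨k, hkm, hk0⟩ := Submodule.exists_mem_ne_zero_of_ne_bot hatom.1
  obtain ⟨x, rfl⟩ := Submodule.mem_span_singleton.1 (hmT hkm).1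
  have hspan : Submodule.span Rᵐᵒᵖ {x • a} = m :=
    (hatom.le_iff.1 ((Submodule.span_singleton_le_iff_mem _ _).2 hkm)).resolve_left
      (by simpa using hk0)
  exact ⟨unop x, show IsSimpleModule Rᵐᵒᵖ _ from hspan ▸ hm⟩

namespace ACCOnRightAnnihilators

theorem exists_maximal (hacc : ACCOnRightAnnihilators R) {ι : Type*} [Nonempty ι]
    (X : ι → Set R) : ∃ i, ∀ j, rAnn R (X i) ⊆ rAnn R (X j) → rAnn R (X j) ⊆ rAnn R (X i) := by
  have hwf : WellFoundedGT {Y : Set R // ∃ X, Y = rAnn R X} := by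
    refine wellFoundedGT_iff_monotone_chain_condition.2 fun f => ?_
    obtain ⟨n, hn⟩ := hacc (fun n => (f n).1) (fun n => (f n).2) fun n => f.mono n.le_succ
    exact ⟨n, fun m hm => Subtype.ext (hn m hm).symm⟩
  obtain ⟨_, ⟨i, rfl⟩, hi⟩ := hwf.wf.has_min
    (Set.range fun i => (⟨rAnn R (X i), X i, rfl⟩ : {Y : Set R // ∃ X, Y = rAnn R X}))
    (Set.range_nonempty _)
  exact ⟨i, fun j hij => (hij.eq_or_ssubset.resolve_right fun h => hi _ ⟨j, rfl⟩ h).superset⟩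

theorem exists_finset_lAnnI_eq (hacc : ACCOnRightAnnihilators R) (S : Set R) :
    ∃ F : Finset R, ↑F ⊆ S ∧ lAnnI R ↑F = lAnnI R S := by
  classical
  have : Nonempty {F : Finset R // ↑F ⊆ S} := ⟨⟨∅, by simp⟩⟩
  obtain ⟨⟨F, hFS⟩, hmax⟩ :=
    hacc.exists_maximal fun F : {F : Finset R // ↑F ⊆ S} => lAnn R (F.1 : Set R)
  refine ⟨F, hFS, le_antisymm (fun a ha k hk => ?_) fun a ha k hk => ha k (hFS hk)⟩
  have hinsert : ((insert k F : Finset R) : Set R) ⊆ S := by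
    rw [Finset.coe_insert]
    exact Set.insert_subset hk hFS
  refine hmax ⟨insert k F, hinsert⟩ (fun t ht y hy => ?_) (fun y hy => ?_) a ha
  · exact ht y fun x hx => hy x (Finset.mem_insert_of_mem hx)
  · exact hy k (Finset.mem_insert_self k F)

theorem isNilpotent_of_forall_exists_annihilated (hacc : ACCOnRightAnnihilators R)
    {I : Ideal R} (hI : ∀ a ≠ 0, ∃ x : R, a * x ≠ 0 ∧ ∀ z ∈ I, z * (a * x) = 0) :
    IsNilpotent I := by
  obtain ⟨n, hn⟩ := hacc (fun n => rAnn R ((I ^ n : Ideal R) : Set R)) (fun n => ⟨_, rfl⟩)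
    fun n x hx y hy => hx y (Ideal.pow_le_pow_right n.le_succ hy)
  let N : Set R := rAnn R ((I ^ n : Ideal R) : Set R)
  by_contra hnil
  have hone : (1 : R) ∉ N := fun h =>
    hnil ⟨n, eq_bot_iff.2 fun x hx => by simpa using h x hx⟩
  have : Nonempty {a : R // a ∉ N} := ⟨⟨1, hone⟩⟩
  obtain ⟨⟨a, haN⟩, hmax⟩ := hacc.exists_maximal fun a : {a : R // a ∉ N} => {a.1}
  have ha : a ≠ 0 := fun h => haN fun y _ => by rw [h, mul_zero]
  -- Otherwise `{z * a}` has a larger right annihilator than `{a}`, against the choice of `a`.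
  have hmul : ∀ z ∈ I, z * a ∈ N := by
    intro z hz
    by_contra hza
    obtain ⟨x, hax, hx⟩ := hI a ha
    refine hax (hmax ⟨z * a, hza⟩ ?_ ?_ a rfl)
    · rintro t ht _ rfl
      rw [mul_assoc, ht a rfl, mul_zero]
    · rintro _ rfl
      rw [mul_assoc, hx z hz]
  have hpow : I ^ (n + 1) ≤ lAnnI R {a} := by
    rw [Submodule.pow_succ, Ideal.mul_le]
    rintro w hw z hz _ rfl
    rw [mul_assoc, hmul z hz w hw]
  exact haN ((hn (n + 1) n.le_succ).subset fun y hy => hpow hy a rfl)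

theorem isSemisimpleModule_quotient_lAnnI (hacc : ACCOnRightAnnihilators R) {S : Set R}
    (hS : ∀ k ∈ S, IsSimpleModule R (Submodule.span R {k})) :
    IsSemisimpleModule R (R ⧸ lAnnI R S) := by
  obtain ⟨F, hFS, hF⟩ := hacc.exists_finset_lAnnI_eq S
  have hsimple (k : F) : IsSimpleModule R (Submodule.span R {(k : R)}) := hS k (hFS k.2)
  let f : R →ₗ[R] (k : F) → Submodule.span R {(k : R)} :=
    LinearMap.pi fun k => LinearMap.toSpanSingleton R _ ⟨k, Submodule.mem_span_singleton_self _⟩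
  have hker : LinearMap.ker f = lAnnI R S := by
    rw [← hF]
    ext a
    exact funext_iff.trans <| (forall_congr' fun k => Subtype.ext_iff).trans Subtype.forall
  rw [← hker]
  exact .congr f.quotKerEquivRange

end ACCOnRightAnnihilators

theorem isSemisimpleRing_quotient_of_isSemisimpleModule {I : Ideal R} [I.IsTwoSided]
    [IsSemisimpleModule R (R ⧸ I)] : IsSemisimpleRing (R ⧸ I) := by
  let φ : (R ⧸ I) →ₛₗ[Ideal.Quotient.mk I] (R ⧸ I) :=
    { AddMonoidHom.id _ with
      map_smul' := fun _ x => Quotient.inductionOn' x fun _ => rfl }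
  have : RingHomSurjective (Ideal.Quotient.mk I) := ⟨Ideal.Quotient.mk_surjective⟩
  exact (φ.isSemisimpleModule_iff_of_bijective Function.bijective_id).1 inferInstance

variable (R) in
/-- The left annihilator of the right socle, computed on the generators of the minimal right
ideals. -/
def socleAnn : Ideal R := lAnnI R {k | IsRightMinimal k}

instance : (socleAnn R).IsTwoSided where
  mul_mem_of_left {a} b ha := by
    intro k hk
    rw [mul_assoc]
    by_cases hbk : b * k = 0
    · rw [hbk, mul_zero]
    · exact ha _ (IsRightMinimal.mul_left hk hbk)

theorem isNilpotent_socleAnn (hacc : ACCOnRightAnnihilators R)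
    (hess : IsEssentialRIdeal R (rSocle R)) : IsNilpotent (socleAnn R) :=
  hacc.isNilpotent_of_forall_exists_annihilated fun _ ha =>
    let ⟨x, hx⟩ := exists_isRightMinimal_mul hess ha
    ⟨x, hx.ne_zero, fun _ hz => hz _ hx⟩

theorem isSemisimpleRing_quotient_socleAnn (hsi : IsRightSimpleInjective R)
    (hacc : ACCOnRightAnnihilators R) : IsSemisimpleRing (R ⧸ socleAnn R) :=
  have : IsSemisimpleModule R (R ⧸ socleAnn R) :=
    hacc.isSemisimpleModule_quotient_lAnnI fun _ hk => hsi.isSimpleModule_span_singleton hk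
  isSemisimpleRing_quotient_of_isSemisimpleModule

section LiftSemisimple

variable {A B : Type*} [Ring A] [Ring B] {φ : A →+* B}

theorem exists_mem_forall_sub_mul_mem_ker [IsSemisimpleRing B] (hφ : Function.Surjective φ)
    (I : Ideal A) : ∃ e ∈ I, ∀ x ∈ I, x - x * e ∈ RingHom.ker φ := by
  obtain ⟨f, hf, hI⟩ := IsSemisimpleRing.ideal_eq_span_idempotent (I.map φ)
  obtain ⟨e, he, rfl⟩ := (Ideal.mem_map_iff_of_surjective φ hφ).1
    (hI ▸ Ideal.mem_span_singleton_self f)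
  refine ⟨e, he, fun x hx => ?_⟩
  obtain ⟨b, hb⟩ := Ideal.mem_span_singleton'.1 (hI ▸ Ideal.mem_map_of_mem φ hx)
  rw [RingHom.mem_ker, map_sub, map_mul, ← hb, mul_assoc, hf.eq, sub_self]

theorem le_jacobson_of_isNilpotent {I : Ideal A} (hI : IsNilpotent I) : I ≤ Ring.jacobson A := by
  intro x hx
  rw [← Ideal.jacobson_bot, Ideal.mem_jacobson_iff]
  intro y
  obtain ⟨u, hu⟩ := (isNilpotent_of_mem_of_isNilpotent hI (I.mul_mem_left y hx)).isUnit_add_one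
  refine ⟨↑u⁻¹, ?_⟩
  rw [Ideal.mem_bot, mul_assoc, ← mul_add_one, ← hu, Units.inv_mul, sub_self]

theorem isSemiprimaryRing_of_surjective [IsSemisimpleRing B] (hφ : Function.Surjective φ)
    (hker : IsNilpotent (RingHom.ker φ)) : IsSemiprimaryRing A := by
  have : RingHomSurjective φ := ⟨hφ⟩
  have hJ : Ring.jacobson A = RingHom.ker φ :=
    le_antisymm (IsSemisimpleModule.jacobson_le_ker _ _ _ _ φ.toSemilinearMap)
      (le_jacobson_of_isNilpotent hker)
  exact ⟨((Ideal.quotEquivOfEq hJ).trans (RingHom.quotientKerEquivOfSurjective hφ)).symm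
    |>.isSemisimpleRing, hJ ▸ hker⟩

theorem op_surjective_of_surjective (hφ : Function.Surjective φ) :
    Function.Surjective (RingHom.op φ) :=
  (op_surjective.comp hφ).comp unop_surjective

theorem unop_mem_ker_pow_of_mem_ker_op_pow (n : ℕ) {x : Aᵐᵒᵖ}
    (hx : x ∈ RingHom.ker (RingHom.op φ) ^ n) : unop x ∈ RingHom.ker φ ^ n := by
  induction n generalizing x with
  | zero => rw [Submodule.pow_zero, Ideal.one_eq_top]; trivial
  | succ n ih =>
    rw [Submodule.pow_succ] at hx
    rw [Ideal.IsTwoSided.pow_succ]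
    refine Submodule.mul_induction_on hx (fun a ha b hb => ?_) fun a b ha hb => ?_
    · exact Ideal.mul_mem_mul (op_injective hb : unop b ∈ RingHom.ker φ) (ih ha)
    · exact add_mem ha hb

theorem isNilpotent_ker_op (hker : IsNilpotent (RingHom.ker φ)) :
    IsNilpotent (RingHom.ker (RingHom.op φ)) := by
  obtain ⟨n, hn⟩ := hker
  refine ⟨n, eq_bot_iff.2 fun x hx => unop_injective ?_⟩
  have := unop_mem_ker_pow_of_mem_ker_op_pow n hx
  rwa [hn] at this

end LiftSemisimple

theorem exists_mem_forall_sub_mul_mem {J : Ideal R} [J.IsTwoSided] [IsSemisimpleRing (R ⧸ J)]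
    (I : Ideal R) : ∃ e ∈ I, ∀ x ∈ I, x - x * e ∈ J := by
  simpa only [Ideal.mk_ker] using
    exists_mem_forall_sub_mul_mem_ker (Ideal.Quotient.mk_surjective (I := J)) I

theorem exists_mem_forall_sub_mul_mem_of_rIdeal {J : Ideal R} [J.IsTwoSided]
    [IsSemisimpleRing (R ⧸ J)] (T : RIdeal R) : ∃ e ∈ T, ∀ x ∈ T, x - e * x ∈ J := by
  obtain ⟨e, he, h⟩ := exists_mem_forall_sub_mul_mem_ker
    (op_surjective_of_surjective (Ideal.Quotient.mk_surjective (I := J)))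
    (T.comap (LinearMap.toSpanSingleton Rᵐᵒᵖ R 1))
  refine ⟨unop e, by simpa using he, fun x hx => ?_⟩
  have := h (op x) (by simpa using hx)
  exact Ideal.Quotient.eq_zero_iff_mem.1 (op_injective this)

theorem isSemiprimaryRing_mulOpposite_s17 {J : Ideal R} [J.IsTwoSided] [IsSemisimpleRing (R ⧸ J)]
    (hJ : IsNilpotent J) : IsSemiprimaryRing Rᵐᵒᵖ :=
  isSemiprimaryRing_of_surjective
    (op_surjective_of_surjective (Ideal.Quotient.mk_surjective (I := J)))
    (isNilpotent_ker_op (by rwa [Ideal.mk_ker]))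

/-- The generators of the minimal right ideals contained in the right annihilator of `I`. -/
def minimalRAnn (I : Ideal R) : Set R := {k | IsRightMinimal k ∧ ∀ i ∈ I, i * k = 0}

theorem minimalRAnn_anti {I I' : Ideal R} (h : I ≤ I') : minimalRAnn I' ⊆ minimalRAnn I :=
  fun _ hk => ⟨hk.1, fun i hi => hk.2 i (h hi)⟩

theorem mul_mem_minimalRAnn {I : Ideal R} {k r : R} (hk : k ∈ minimalRAnn I) (hkr : k * r ≠ 0) :
    k * r ∈ minimalRAnn I :=
  ⟨hk.1.mul_right hkr, fun i hi => by rw [← mul_assoc, hk.2 i hi, zero_mul]⟩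

/-- The right annihilator of the socle of the right annihilator of `I`; it is a two-sided ideal,
encoded as a left ideal to make it comparable with `I`. -/
def socleDoubleAnn (I : Ideal R) : Ideal R where
  carrier := rAnn R (minimalRAnn I)
  add_mem' ha hb k hk := by rw [mul_add, ha k hk, hb k hk, add_zero]
  zero_mem' k _ := mul_zero k
  smul_mem' c a ha k hk := by
    rw [smul_eq_mul, ← mul_assoc]
    by_cases hkc : k * c = 0
    · rw [hkc, zero_mul]
    · exact ha _ (mul_mem_minimalRAnn hk hkc)

theorem mem_socleDoubleAnn {I : Ideal R} {a : R} :
    a ∈ socleDoubleAnn I ↔ ∀ k ∈ minimalRAnn I, k * a = 0 := Iff.rfl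

instance (I : Ideal R) : (socleDoubleAnn I).IsTwoSided where
  mul_mem_of_left b ha k hk := by rw [← mul_assoc, ha k hk, zero_mul]

theorem socleDoubleAnn_mono : Monotone (socleDoubleAnn (R := R)) :=
  fun _ _ h _ ha k hk => ha k (minimalRAnn_anti h hk)

theorem socleAnn_le_socleDoubleAnn (hZ : IsNilpotent (socleAnn R)) (I : Ideal R) :
    socleAnn R ≤ socleDoubleAnn I :=
  fun _ hz _ hk => hk.1.mul_eq_zero_of_isNilpotent hZ hz

theorem mem_of_forall_mul_minimalRAnn_eq_zero [IsSemisimpleRing (R ⧸ socleAnn R)] {I : Ideal R}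
    (hI : socleAnn R ≤ I) {a : R} (ha : ∀ k ∈ minimalRAnn I, a * k = 0) : a ∈ I := by
  obtain ⟨e, he, hIe⟩ := exists_mem_forall_sub_mul_mem (J := socleAnn R) I
  have hae : a * (1 - e) ∈ socleAnn R := by
    intro k hk
    rw [mul_assoc]
    by_cases hek : (1 - e) * k = 0
    · rw [hek, mul_zero]
    · refine ha _ ⟨IsRightMinimal.mul_left hk hek, fun i hi => ?_⟩
      rw [← mul_assoc, mul_sub, mul_one]
      exact hIe i hi k hk
  have : a = a * (1 - e) + a * e := by rw [← mul_add, sub_add_cancel, mul_one]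
  rw [this]
  exact I.add_mem (hI hae) (I.mul_mem_left a he)

theorem mem_minimalRAnn_of_forall_mul_socleDoubleAnn_eq_zero (hsi : IsRightSimpleInjective R)
    [IsSemisimpleRing (R ⧸ socleAnn R)] (hZ : IsNilpotent (socleAnn R)) {I : Ideal R}
    [I.IsTwoSided] {k : R} (hk : IsRightMinimal k) (hkI : ∀ a ∈ socleDoubleAnn I, k * a = 0) :
    k ∈ minimalRAnn I := by
  obtain ⟨e, he, hTe⟩ := exists_mem_forall_sub_mul_mem_of_rIdeal (J := socleAnn R) (rAnnI R {k})
  have hke : k * e = 0 := he k rfl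
  have hone_sub : 1 - e ∉ socleDoubleAnn I := fun h =>
    hk.ne_zero (by simpa [mul_sub, hke] using hkI _ h)
  rw [mem_socleDoubleAnn] at hone_sub
  push Not at hone_sub
  obtain ⟨x, hx, hxe⟩ := hone_sub
  have hann : ∀ r, k * r = 0 → x * (1 - e) * r = 0 := fun r hr => by
    rw [mul_assoc, sub_mul, one_mul]
    refine hx.1.mul_eq_zero_of_isNilpotent hZ (hTe r ?_)
    rintro _ rfl
    exact hr
  obtain ⟨c, rfl⟩ := hsi.exists_eq_mul_of_forall_mul_eq_zero hk hxe hann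
  refine ⟨hk, fun i hi => ?_⟩
  rw [← mul_assoc, ← mul_assoc, hx.2 _ (I.mul_mem_right c hi), zero_mul]

theorem le_of_socleDoubleAnn_le (hsi : IsRightSimpleInjective R)
    [IsSemisimpleRing (R ⧸ socleAnn R)] (hZ : IsNilpotent (socleAnn R)) {I I' : Ideal R}
    [I'.IsTwoSided] (hI : socleAnn R ≤ I) (h : socleDoubleAnn I' ≤ socleDoubleAnn I) :
    I' ≤ I := fun a ha =>
  mem_of_forall_mul_minimalRAnn_eq_zero hI fun _ hk =>
    (mem_minimalRAnn_of_forall_mul_socleDoubleAnn_eq_zero hsi hZ hk.1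
      fun _ hb => h hb _ hk).2 a ha

theorem socleDoubleAnn_socleAnn_le (hsi : IsRightSimpleInjective R)
    (hacc : ACCOnRightAnnihilators R) [IsSemisimpleRing (R ⧸ socleAnn R)]
    (hZ : IsNilpotent (socleAnn R)) : socleDoubleAnn (socleAnn R) ≤ socleAnn R := by
  by_contra hnot
  let ι := {I : Ideal R // socleAnn R ≤ I ∧ I ≤ socleDoubleAnn I ∧ ¬ socleDoubleAnn I ≤ I}
  have : Nonempty ι := ⟨⟨socleAnn R, le_rfl, socleAnn_le_socleDoubleAnn hZ _, hnot⟩⟩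
  obtain ⟨⟨I, hZI, hI, hIlt⟩, hmax⟩ := hacc.exists_maximal fun I : ι => minimalRAnn I.1
  have hstep : ¬ socleDoubleAnn (socleDoubleAnn I) ≤ socleDoubleAnn I := fun h =>
    hIlt (le_of_socleDoubleAnn_le hsi hZ hZI h)
  exact hstep (hmax ⟨socleDoubleAnn I, socleAnn_le_socleDoubleAnn hZ I, socleDoubleAnn_mono hI,
    hstep⟩ (socleDoubleAnn_mono hI))

variable (R) in
/-- The right Kasch condition: every proper right ideal is annihilated on the left by a generator
of a minimal right ideal, so every simple right module embeds in `R`. -/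
def IsRightKasch : Prop :=
  ∀ T : RIdeal R, T ≠ ⊤ → ∃ w, IsRightMinimal w ∧ ∀ t ∈ T, w * t = 0

theorem isRightKasch (hsi : IsRightSimpleInjective R)
    (hacc : ACCOnRightAnnihilators R) [IsSemisimpleRing (R ⧸ socleAnn R)]
    (hZ : IsNilpotent (socleAnn R)) : IsRightKasch R := by
  intro T hT
  obtain ⟨e, he, hTe⟩ := exists_mem_forall_sub_mul_mem_of_rIdeal (J := socleAnn R) T
  have hone_sub : 1 - e ∉ socleAnn R := by
    intro h
    obtain ⟨u, hu⟩ := (isNilpotent_of_mem_of_isNilpotent hZ h).isUnit_one_sub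
    rw [sub_sub_cancel] at hu
    refine hT (eq_top_iff.2 fun x _ => ?_)
    simpa [← hu] using T.smul_mem (op (↑u⁻¹ * x)) he
  have hdouble : 1 - e ∉ socleDoubleAnn (socleAnn R) := fun h =>
    hone_sub (socleDoubleAnn_socleAnn_le hsi hacc hZ h)
  rw [mem_socleDoubleAnn] at hdouble
  push Not at hdouble
  obtain ⟨x, hx, hxe⟩ := hdouble
  refine ⟨x * (1 - e), hx.1.mul_right hxe, fun t ht => ?_⟩
  rw [mul_assoc, sub_mul, one_mul]
  exact hx.1.mul_eq_zero_of_isNilpotent hZ (hTe t ht)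

theorem rAnnI_lAnn_eq (hsi : IsRightSimpleInjective R) (hK : IsRightKasch R) (T : RIdeal R) :
    rAnnI R (lAnn R T) = T := by
  refine le_antisymm (fun b hb => ?_) fun t ht u hu => hu t ht
  by_contra hbT
  obtain ⟨w, hw, hwT⟩ := hK (T.comap (LinearMap.mulLeft Rᵐᵒᵖ b)) fun htop => hbT <| by
    simpa using (htop ▸ Submodule.mem_top : (1 : R) ∈ T.comap (LinearMap.mulLeft Rᵐᵒᵖ b))
  -- `b * r + t ↦ w * r` is well defined on `bR + T`, hence left multiplication by some `c`.
  let g : (R × T) →ₗ[Rᵐᵒᵖ] R := (LinearMap.mulLeft Rᵐᵒᵖ b).coprod T.subtype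
  let h : (R × T) →ₗ[Rᵐᵒᵖ] R := LinearMap.mulLeft Rᵐᵒᵖ w ∘ₗ LinearMap.fst Rᵐᵒᵖ R T
  have hgh : LinearMap.ker g ≤ LinearMap.ker h := by
    rintro ⟨r, t⟩ hrt
    have hbr : b * r = -t := eq_neg_of_add_eq_zero_left hrt
    exact hwT r (show b * r ∈ T from hbr ▸ T.neg_mem t.2)
  have hrange : LinearMap.range h = Submodule.span Rᵐᵒᵖ {w} := by
    rw [LinearMap.range_comp_of_range_eq_top _ Submodule.range_fst, range_mulLeft]
  obtain ⟨c, hc⟩ := hsi.exists_eq_mul hgh (hrange ▸ hw)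
  have hcT : c ∈ lAnn R (T : Set R) := fun t ht => by
    simpa [g, h] using (hc (0, ⟨t, ht⟩)).symm
  have hwcb : w = c * b := by simpa [g, h] using hc (1, 0)
  exact hw.ne_zero (hwcb.trans (hb c hcT))

theorem ACCOnRightAnnihilators.isNoetherian (hacc : ACCOnRightAnnihilators R)
    (hrl : ∀ T : RIdeal R, rAnnI R (lAnn R T) = T) : IsNoetherian Rᵐᵒᵖ R := by
  refine monotone_stabilizes_iff_noetherian.1 fun f => ?_
  obtain ⟨n, hn⟩ := hacc (fun n => (f n : Set R))
    (fun n => ⟨lAnn R (f n), congrArg SetLike.coe (hrl (f n)).symm⟩)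
    fun n => f.monotone n.le_succ
  exact ⟨n, fun m hm => SetLike.coe_injective (hn m hm).symm⟩

namespace IsRightSimpleInjective

theorem exists_eq_mul_of_isFiniteLength (hsi : IsRightSimpleInjective R) {P : Type*}
    [AddCommGroup P] [Module Rᵐᵒᵖ P] (hP : IsFiniteLength Rᵐᵒᵖ P) {g h : P →ₗ[Rᵐᵒᵖ] R}
    (hgh : LinearMap.ker g ≤ LinearMap.ker h) : ∃ c : R, ∀ p, h p = c * g p := by
  induction hP with
  | of_subsingleton => exact ⟨0, fun p => by rw [Subsingleton.elim p 0, map_zero, zero_mul]⟩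
  | @of_simple_quotient P _ _ N hN _ ih =>
    obtain ⟨c, hc⟩ := ih (g := g ∘ₗ N.subtype) (h := h ∘ₗ N.subtype) fun n hn => hgh hn
    let h' : P →ₗ[Rᵐᵒᵖ] R := h - LinearMap.mulLeft Rᵐᵒᵖ c ∘ₗ g
    have hN' : N ≤ LinearMap.ker h' := fun n hn => sub_eq_zero.2 (hc ⟨n, hn⟩)
    have hgh' : LinearMap.ker g ≤ LinearMap.ker h' := fun p hp => by
      have hgp : g p = 0 := hp
      have hhp : h p = 0 := hgh hp
      simp [h', hgp, hhp]
    rcases eq_zero_or_isSimpleModule_range_of_isCoatom_le_ker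
      (isSimpleModule_iff_isCoatom.1 hN) hN' with hzero | hsimple
    · exact ⟨c, fun p => sub_eq_zero.1 (LinearMap.congr_fun hzero p)⟩
    · obtain ⟨d, hd⟩ := hsi.exists_eq_mul hgh' hsimple
      exact ⟨d + c, fun p => by rw [add_mul, ← hd p]; exact (sub_add_cancel _ _).symm⟩

theorem baer_of_isFiniteLength (hsi : IsRightSimpleInjective R) (hR : IsFiniteLength Rᵐᵒᵖ R) :
    Module.Baer Rᵐᵒᵖ R := by
  intro I f
  let g : I →ₗ[Rᵐᵒᵖ] R := LinearMap.toSpanSingleton Rᵐᵒᵖ R 1 ∘ₗ I.subtype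
  have hg : ∀ x, g x = unop (x : Rᵐᵒᵖ) := fun x => one_mul _
  have hinj : Function.Injective g := fun x y hxy =>
    Subtype.ext (unop_injective (by rw [← hg, ← hg, hxy]))
  obtain ⟨c, hc⟩ := hsi.exists_eq_mul_of_isFiniteLength (hR.of_injective hinj)
    (g := g) (h := f) (LinearMap.ker_eq_bot.2 hinj ▸ bot_le)
  refine ⟨LinearMap.toSpanSingleton Rᵐᵒᵖ R c, fun x hx => ?_⟩
  rw [hc ⟨x, hx⟩, hg ⟨x, hx⟩]
  rfl

end IsRightSimpleInjective

theorem apply_eq_sum_apply_single_mul {ι : Type*} [Fintype ι] [DecidableEq ι]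
    (φ : (ι → R) →ₗ[Rᵐᵒᵖ] R) (y : ι → R) : φ y = ∑ i, φ (Pi.single i 1) * y i := by
  conv_lhs => rw [← Finset.univ_sum_single y, map_sum]
  refine Finset.sum_congr rfl fun i _ => ?_
  rw [← op_smul_eq_mul, ← map_smul, ← Pi.single_smul, op_smul_eq_mul, one_mul]

theorem mem_span_of_rAnn_subset (hB : Module.Baer Rᵐᵒᵖ R) {s : Finset R} {b : R}
    (h : rAnn R (s : Set R) ⊆ rAnn R {b}) : b ∈ Submodule.span R (s : Set R) := by
  classical
  obtain ⟨φ, hφ⟩ := exists_comp_eq_of_baer_of_ker_le_ker hB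
    (g := LinearMap.pi fun a : s => LinearMap.mulLeft Rᵐᵒᵖ (a : R))
    (h := LinearMap.mulLeft Rᵐᵒᵖ b)
    fun x hx => h (fun a ha => congrFun hx ⟨a, ha⟩) b rfl
  have hb : b = ∑ a : s, φ (Pi.single a 1) * a := by
    have hφ1 := LinearMap.congr_fun hφ 1
    rw [LinearMap.comp_apply, apply_eq_sum_apply_single_mul φ] at hφ1
    simpa using hφ1.symm
  rw [hb]
  exact sum_mem fun a _ => Submodule.smul_mem _ _ (Submodule.subset_span a.2)

theorem isNoetherianRing_of_baer_mulOpposite (hB : Module.Baer Rᵐᵒᵖ R) [IsArtinian Rᵐᵒᵖ R] :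
    IsNoetherianRing R := by
  classical
  refine (isNoetherianRing_iff_ideal_fg R).2 fun L => ?_
  obtain ⟨_, ⟨s, hsL, rfl⟩, hmin⟩ := IsArtinian.set_has_minimal
    ((fun s : Finset R => rAnnI R (s : Set R)) '' {s | (s : Set R) ⊆ L}) ⟨_, ∅, by simp, rfl⟩
  refine ⟨s, le_antisymm (Submodule.span_le.2 hsL) fun b hb => mem_span_of_rAnn_subset hB ?_⟩
  have hle : rAnnI R ((insert b s : Finset R) : Set R) ≤ rAnnI R (s : Set R) :=
    fun t ht a ha => ht a (Finset.mem_insert_of_mem ha)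
  have hins : ((insert b s : Finset R) : Set R) ⊆ L := by
    rw [Finset.coe_insert]
    exact Set.insert_subset hb hsL
  have hge := (hle.eq_of_not_lt (hmin _ ⟨_, hins, rfl⟩)).ge
  rintro x hx _ rfl
  exact hge hx _ (Finset.mem_insert_self _ s)

theorem IsRightKasch.exists_le_ker_apply_ne_zero (hK : IsRightKasch R)
    (hB : Module.Baer Rᵐᵒᵖ R) {P : Type*} [AddCommGroup P] [Module Rᵐᵒᵖ P]
    {T : Submodule Rᵐᵒᵖ P} {y : P} (hy : y ∉ T) :
    ∃ φ : P →ₗ[Rᵐᵒᵖ] R, T ≤ LinearMap.ker φ ∧ φ y ≠ 0 := by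
  let g : Rᵐᵒᵖ →ₗ[Rᵐᵒᵖ] P ⧸ T := LinearMap.toSpanSingleton Rᵐᵒᵖ (P ⧸ T) (T.mkQ y)
  have hproper : (LinearMap.ker g).map (LinearMap.toSpanSingleton Rᵐᵒᵖ R 1) ≠ ⊤ := by
    intro htop
    obtain ⟨c, hc, hc1⟩ := (htop ▸ Submodule.mem_top :
      (1 : R) ∈ (LinearMap.ker g).map (LinearMap.toSpanSingleton Rᵐᵒᵖ R 1))
    obtain rfl : c = 1 := unop_injective (by simpa using hc1)
    exact hy (by simpa [g] using hc)
  obtain ⟨w, hw, hwT⟩ := hK _ hproper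
  obtain ⟨ψ, hψ⟩ := exists_comp_eq_of_baer_of_ker_le_ker hB (g := g)
    (h := LinearMap.toSpanSingleton Rᵐᵒᵖ R w)
    fun c hc => by simpa using hwT _ (Submodule.mem_map_of_mem hc)
  refine ⟨ψ ∘ₗ T.mkQ, fun t ht => ?_, ?_⟩
  · simp [(Submodule.Quotient.mk_eq_zero T).2 ht]
  · have hψy : ψ (T.mkQ y) = w := by simpa [g] using LinearMap.congr_fun hψ 1
    exact fun h => hw.ne_zero (hψy.symm.trans h)

theorem IsRightKasch.baer_of_baer_mulOpposite (hK : IsRightKasch R) (hB : Module.Baer Rᵐᵒᵖ R)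
    [IsNoetherianRing R] : Module.Baer R R := by
  classical
  intro L g
  obtain ⟨s, rfl⟩ := IsNoetherian.noetherian L
  let gen (a : s) : Submodule.span R (s : Set R) := ⟨a, Submodule.subset_span a.2⟩
  let D : R →ₗ[Rᵐᵒᵖ] s → R := LinearMap.pi fun a : s => LinearMap.mulLeft Rᵐᵒᵖ (a : R)
  -- `R` cogenerates, so a vector outside the image of `D` is detected by a relation among the
  -- generators, which `g` has to respect.
  have hgD : (fun a => g (gen a)) ∈ LinearMap.range D := by
    by_contra hgD
    obtain ⟨φ, hφ, hφg⟩ := hK.exists_le_ker_apply_ne_zero hB hgD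
    have hrel : ∑ a : s, φ (Pi.single a 1) • gen a = 0 := by
      have hD1 : φ (D 1) = 0 := hφ ⟨1, rfl⟩
      rw [apply_eq_sum_apply_single_mul φ] at hD1
      exact Subtype.ext (by simpa [D, gen] using hD1)
    refine hφg ?_
    rw [apply_eq_sum_apply_single_mul φ]
    simpa using congrArg g hrel
  obtain ⟨d, hd⟩ := hgD
  have hext : g = LinearMap.toSpanSingleton R R d ∘ₗ Submodule.subtype _ :=
    (Submodule.linearMap_eq_iff_of_eq_span _ _ rfl).2 fun a => (congrFun hd a).symm
  exact ⟨LinearMap.toSpanSingleton R R d, fun x hx => by rw [hext]; rfl⟩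

end SimpleInjective

/-- Right simple injective with ACC on right annihilators and essential right
socle implies QF. -/
theorem stmt17 (R : Type*) [Ring R] (hsi : IsRightSimpleInjective R)
    (hacc : ACCOnRightAnnihilators R) (hess : IsEssentialRIdeal R (rSocle R)) :
    IsQuasiFrobenius R := by
  have hZ : IsNilpotent (socleAnn R) := isNilpotent_socleAnn hacc hess
  have : IsSemisimpleRing (R ⧸ socleAnn R) := isSemisimpleRing_quotient_socleAnn hsi hacc
  have : IsSemiprimaryRing Rᵐᵒᵖ := isSemiprimaryRing_mulOpposite_s17 hZ
  have hK : IsRightKasch R := isRightKasch hsi hacc hZ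
  have hnoeth : IsNoetherian Rᵐᵒᵖ R := hacc.isNoetherian (rAnnI_lAnn_eq hsi hK)
  have hart : IsArtinian Rᵐᵒᵖ R := IsSemiprimaryRing.isNoetherian_iff_isArtinian.1 hnoeth
  have hB : Module.Baer Rᵐᵒᵖ R := hsi.baer_of_isFiniteLength
    (isFiniteLength_iff_isNoetherian_isArtinian.2 ⟨hnoeth, hart⟩)
  have : IsNoetherianRing R := isNoetherianRing_of_baer_mulOpposite hB
  exact ⟨this, (hK.baer_of_baer_mulOpposite hB).injective⟩
end
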